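/- Let σ > 0 and N ≥ 2 an integer, assume Π⁺ is continuously differentiable on (m, M) and that the limit Ψ⁺ₓ(M) = lim_{x→M⁻} (d/dx)Ψ⁺(x) exists, and let F : ℝ → (m, M) be a solution of equation (E). Then: (a) M − F is regularly varying at ∞ of index ρ⁺ = (Ψ⁺ₓ(M) − 1)/(1 − Ψ⁺ₓ(M)/N), i.e. for every x > 0, (M − F(αx))/(M − F(α)) → x^{ρ⁺} as α → ∞; (b) if moreover Ψ⁺ₓ(M) = 1 and there exist an integer n ≥ 1 and k ∈ (0, ∞) such that lim_{x→M⁻} (Ψ⁺(x) − x)/(M − x)^{n+1} = 1/k, then M − F(x) ∼ ((N/(N−1))·(n/k))^{−1/n}·(log x)^{−1/n} as x → ∞, i.e. the ratio of the two sides converges to 1. -/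

import Mathlib

open MeasureTheory Filter Set

/-- Centered Gaussian density with variance `σ²`. -/
noncomputable def gq (σ z : ℝ) : ℝ :=
  Real.exp (-(z ^ 2) / (2 * σ ^ 2)) / (σ * Real.sqrt (2 * Real.pi))

/-- The averaged kernel `q̄(σ,x,z)`. -/
noncomputable def gqbar (σ x z : ℝ) : ℝ :=
  if x = 0 then gq σ z else (1 / x) * ∫ y in (0:ℝ)..x, gq σ (y - z)

/-- `Φ⁺(y) = E[V·1_{V>y}]`. -/
noncomputable def Phip {Ω : Type*} [MeasurableSpace Ω] (P : Measure Ω) (V : Ω → ℝ) (y : ℝ) : ℝ :=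
  ∫ ω in {ω | V ω > y}, V ω ∂P

/-- `Π⁺(y) = P(V > y)`. -/
noncomputable def Pip {Ω : Type*} [MeasurableSpace Ω] (P : Measure Ω) (V : Ω → ℝ) (y : ℝ) : ℝ :=
  (P {ω | V ω > y}).toReal

/-- `Φ⁻(y) = E[V·1_{V≤y}]`. -/
noncomputable def Phim {Ω : Type*} [MeasurableSpace Ω] (P : Measure Ω) (V : Ω → ℝ) (y : ℝ) : ℝ :=
  ∫ ω in {ω | V ω ≤ y}, V ω ∂P

/-- `Π⁻(y) = P(V ≤ y)`. -/
noncomputable def Pim {Ω : Type*} [MeasurableSpace Ω] (P : Measure Ω) (V : Ω → ℝ) (y : ℝ) : ℝ :=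
  (P {ω | V ω ≤ y}).toReal

/-- `Ψ⁺ = Φ⁺/Π⁺`. -/
noncomputable def Psip {Ω : Type*} [MeasurableSpace Ω] (P : Measure Ω) (V : Ω → ℝ) (y : ℝ) : ℝ :=
  Phip P V y / Pip P V y

/-- `Ψ⁻ = Φ⁻/Π⁻`. -/
noncomputable def Psim {Ω : Type*} [MeasurableSpace Ω] (P : Measure Ω) (V : Ω → ℝ) (y : ℝ) : ℝ :=
  Phim P V y / Pim P V y

/-- `φ⁺_g`. -/
noncomputable def phip {Ω : Type*} [MeasurableSpace Ω] (P : Measure Ω) (V : Ω → ℝ)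
    (σ : ℝ) (g : ℝ → ℝ) (x : ℝ) : ℝ :=
  (∫ z, Phip P V (g z) * gq σ (x - z)) / (∫ z, Pip P V (g z) * gq σ (x - z))

/-- `φ⁻_g`. -/
noncomputable def phim {Ω : Type*} [MeasurableSpace Ω] (P : Measure Ω) (V : Ω → ℝ)
    (σ : ℝ) (g : ℝ → ℝ) (x : ℝ) : ℝ :=
  (∫ z, Phim P V (g z) * gq σ (x - z)) / (∫ z, Pim P V (g z) * gq σ (x - z))

/-- `φ_g`, equal to `φ⁺_g` on `[0,∞)` and `φ⁻_g` on `(−∞,0)`. -/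
noncomputable def phig {Ω : Type*} [MeasurableSpace Ω] (P : Measure Ω) (V : Ω → ℝ)
    (σ : ℝ) (g : ℝ → ℝ) (x : ℝ) : ℝ :=
  if 0 ≤ x then phip P V σ g x else phim P V σ g x

/-- The interior of the support of the law of `V` is `(m, M)` (with `V` bounded). -/
def SuppIoo {Ω : Type*} [MeasurableSpace Ω] (P : Measure Ω) (V : Ω → ℝ) (m M : ℝ) : Prop :=
  m < M ∧ (∀ᵐ ω ∂P, V ω ∈ Set.Icc m M) ∧
    (∀ y < M, 0 < P {ω | V ω > y}) ∧ (∀ y, m < y → 0 < P {ω | V ω ≤ y})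

/-- Equation (E). -/
def SolvesE {Ω : Type*} [MeasurableSpace Ω] (P : Measure Ω) (V : Ω → ℝ)
    (σ : ℝ) (N : ℕ) (F : ℝ → ℝ) : Prop :=
  ∀ x : ℝ, F x =
    ∫ z, ((1 / (N:ℝ)) * gq σ (x - z) + (((N:ℝ) - 1) / (N:ℝ)) * gqbar σ x z) * phig P V σ F z

/-!
Put `u = M - F` and `h = M - φ_F`, let `g` be the Gaussian smoothing of `h`, `A` the running mean
of `g` over `[0, x]`, and `θ = 1 / N`. On the half line, (E) reads `u = θ g + (1 - θ) A`, while `h`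
is the average of `S ∘ u` for the Gaussian weight multiplied by `p ∘ u`, where `p v = Π⁺ (M - v)`
and `S v = M - Ψ⁺ (M - v) < v`. The strict inequality forces `u → 0`.

The weight `p ∘ u` is not bounded below, so `h` is not yet a local average. Comparing `A` with
barriers gives a polynomial lower bound for `p (u x)`, which makes Gaussian tails beyond the scale
`x ^ (1 / 10)` negligible; contracting over the many windows of that length that fit around `x`
then yields `g x = S (u x)` up to a relative error small enough to be integrated against `dx / x`.

Since `S v ~ L v` at `0`, it follows that `x A' / A = (g - A) / A` tends to
`(L - 1) / (1 - θ L)`, which is regular variation. If `L = 1` and `v - S v ~ v ^ (n + 1) / k`, the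
power `1 / A ^ n` satisfies an equation whose solutions grow like a multiple of `log x`.
-/

/-! ### Gaussian smoothing -/

lemma gq_eq_gaussianPDFReal {σ : ℝ} (hσ : 0 < σ) (y z : ℝ) :
    gq σ (y - z) = ProbabilityTheory.gaussianPDFReal y (σ ^ 2).toNNReal z := by
  rw [gq, ProbabilityTheory.gaussianPDFReal, Real.coe_toNNReal _ (sq_nonneg σ),
    Real.sqrt_mul (by positivity) (σ ^ 2), Real.sqrt_sq hσ.le, div_eq_inv_mul, mul_comm σ,
    ← neg_sub z y, neg_sq]

lemma gq_pos {σ : ℝ} (hσ : 0 < σ) (x : ℝ) : 0 < gq σ x := by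
  unfold gq; positivity

lemma continuous_gq (σ : ℝ) : Continuous (gq σ) := by
  unfold gq; fun_prop

lemma gq_neg (σ x : ℝ) : gq σ (-x) = gq σ x := by rw [gq, gq, neg_sq]

lemma gq_le_gq_of_sq_le {σ : ℝ} (hσ : 0 < σ) {x r : ℝ} (h : x ^ 2 ≤ r ^ 2) :
    gq σ r ≤ gq σ x := by
  unfold gq; gcongr

lemma integrable_gq_sub {σ : ℝ} (hσ : 0 < σ) (y : ℝ) : Integrable fun z => gq σ (y - z) := by
  simp_rw [gq_eq_gaussianPDFReal hσ]
  exact ProbabilityTheory.integrable_gaussianPDFReal _ _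

lemma integral_gq_sub {σ : ℝ} (hσ : 0 < σ) (y : ℝ) : ∫ z, gq σ (y - z) = 1 := by
  simp_rw [gq_eq_gaussianPDFReal hσ]
  refine ProbabilityTheory.integral_gaussianPDFReal_eq_one y fun h => ?_
  exact (pow_pos hσ 2).not_ge (Real.toNNReal_eq_zero.1 h)

lemma gq_eq_mul_gq_sqrt_two_mul {σ : ℝ} (hσ : 0 < σ) (x x' : ℝ) :
    gq σ x = √2 * Real.exp (x' ^ 2 / (4 * σ ^ 2) - x ^ 2 / (2 * σ ^ 2)) * gq (√2 * σ) x' := by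
  have h2 : √2 ^ 2 = 2 := Real.sq_sqrt zero_le_two
  have hexp : Real.exp (-(x ^ 2) / (2 * σ ^ 2)) =
      Real.exp (x' ^ 2 / (4 * σ ^ 2) - x ^ 2 / (2 * σ ^ 2)) *
        Real.exp (-(x' ^ 2) / (2 * (√2 * σ) ^ 2)) := by
    rw [← Real.exp_add, mul_pow, h2]
    congr 1; ring
  rw [gq, gq, hexp]
  field_simp

/-- A bound for the mass that the Gaussian kernel `gq σ` puts outside `[-d, d]`. -/
noncomputable def gaussTail (σ d : ℝ) : ℝ := √2 * Real.exp (-(d ^ 2) / (4 * σ ^ 2))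

lemma gaussTail_pos (σ d : ℝ) : 0 < gaussTail σ d := by unfold gaussTail; positivity

lemma gq_le_gaussTail_mul {σ : ℝ} (hσ : 0 < σ) {d x : ℝ} (hd : d ^ 2 ≤ x ^ 2) :
    gq σ x ≤ gaussTail σ d * gq (√2 * σ) x := by
  have hexponent : x ^ 2 / (4 * σ ^ 2) - x ^ 2 / (2 * σ ^ 2) = -(x ^ 2) / (4 * σ ^ 2) := by ring
  rw [gq_eq_mul_gq_sqrt_two_mul hσ x x, gaussTail, hexponent]
  have := (gq_pos (σ := √2 * σ) (by positivity) x).le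
  gcongr

lemma setIntegral_compl_Icc_gq_le {σ : ℝ} (hσ : 0 < σ) {d : ℝ} (hd : 0 ≤ d) (y : ℝ) :
    ∫ z in (Icc (y - d) (y + d))ᶜ, gq σ (y - z) ≤ gaussTail σ d := by
  have h2σ : 0 < √2 * σ := by positivity
  have hint := (integrable_gq_sub h2σ y).const_mul (gaussTail σ d)
  calc ∫ z in (Icc (y - d) (y + d))ᶜ, gq σ (y - z)
      ≤ ∫ z in (Icc (y - d) (y + d))ᶜ, gaussTail σ d * gq (√2 * σ) (y - z) := by
        refine setIntegral_mono_on (integrable_gq_sub hσ y).integrableOn hint.integrableOn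
          measurableSet_Icc.compl fun z hz => gq_le_gaussTail_mul hσ ?_
        rw [sq_le_sq, abs_of_nonneg hd]
        by_contra! hlt
        exact hz ⟨by linarith [(abs_lt.1 hlt).2], by linarith [(abs_lt.1 hlt).1]⟩
    _ ≤ ∫ z, gaussTail σ d * gq (√2 * σ) (y - z) :=
        setIntegral_le_integral hint <| .of_forall fun z =>
          mul_nonneg (gaussTail_pos _ _).le (gq_pos h2σ _).le
    _ = gaussTail σ d := by rw [integral_const_mul, integral_gq_sub h2σ, mul_one]

lemma tendsto_gaussTail {σ : ℝ} (hσ : 0 < σ) : Tendsto (gaussTail σ) atTop (nhds 0) := by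
  have h : Tendsto (fun d : ℝ => -(d ^ 2) / (4 * σ ^ 2)) atTop atBot :=
    (tendsto_neg_atTop_atBot.comp (tendsto_pow_atTop two_ne_zero)).atBot_div_const (by positivity)
  rw [← mul_zero √2]
  exact (Real.tendsto_exp_atBot.comp h).const_mul √2

/-- Bounded measurable real functions, the class on which Gaussian smoothing is used. -/
structure BddMeasurable (f : ℝ → ℝ) : Prop where
  measurable : Measurable f
  bounded : ∃ C, ∀ z, |f z| ≤ C

namespace BddMeasurable
variable {f g : ℝ → ℝ}

lemma of_mem_Icc {a b : ℝ} (hf : Measurable f) (h : ∀ z, f z ∈ Icc a b) : BddMeasurable f :=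
  ⟨hf, max |a| |b|, fun z => abs_le_max_abs_abs (h z).1 (h z).2⟩

lemma const (c : ℝ) : BddMeasurable fun _ => c := ⟨measurable_const, |c|, fun _ => le_rfl⟩

lemma neg (hf : BddMeasurable f) : BddMeasurable fun z => -f z :=
  ⟨hf.measurable.neg, hf.bounded.imp fun _ h z => (abs_neg _).trans_le (h z)⟩

lemma sub (hf : BddMeasurable f) (hg : BddMeasurable g) : BddMeasurable fun z => f z - g z := by
  obtain ⟨C, hC⟩ := hf.bounded
  obtain ⟨D, hD⟩ := hg.bounded
  exact ⟨hf.measurable.sub hg.measurable, C + D,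
    fun z => (abs_sub _ _).trans (add_le_add (hC z) (hD z))⟩

lemma mul (hf : BddMeasurable f) (hg : BddMeasurable g) : BddMeasurable fun z => f z * g z := by
  obtain ⟨C, hC⟩ := hf.bounded
  obtain ⟨D, hD⟩ := hg.bounded
  refine ⟨hf.measurable.mul hg.measurable, C * D, fun z => ?_⟩
  rw [abs_mul]
  exact mul_le_mul (hC z) (hD z) (abs_nonneg _) ((abs_nonneg _).trans (hC z))

end BddMeasurable

/-- The smoothing of `f` by the Gaussian density of variance `σ²`. -/
noncomputable def gaussConv (σ : ℝ) (f : ℝ → ℝ) (y : ℝ) : ℝ := ∫ z, gq σ (y - z) * f z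

section gaussConv
variable {σ : ℝ} {f g : ℝ → ℝ}

lemma integrable_gq_mul (hσ : 0 < σ) (hf : BddMeasurable f) (y : ℝ) :
    Integrable fun z => gq σ (y - z) * f z := by
  obtain ⟨C, hC⟩ := hf.bounded
  exact (integrable_gq_sub hσ y).mul_bdd (c := C) hf.measurable.aestronglyMeasurable (.of_forall hC)

lemma gaussConv_sub (hσ : 0 < σ) (hf : BddMeasurable f) (hg : BddMeasurable g) (y : ℝ) :
    gaussConv σ (fun z => f z - g z) y = gaussConv σ f y - gaussConv σ g y := by
  unfold gaussConv
  rw [← integral_sub (integrable_gq_mul hσ hf y) (integrable_gq_mul hσ hg y)]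
  simp_rw [mul_sub]

lemma gaussConv_neg (f : ℝ → ℝ) (y : ℝ) : gaussConv σ (fun z => -f z) y = -gaussConv σ f y := by
  simp only [gaussConv, mul_neg, integral_neg]

lemma gaussConv_const_mul (c y : ℝ) :
    gaussConv σ (fun z => c * f z) y = c * gaussConv σ f y := by
  simp only [gaussConv, ← integral_const_mul, mul_left_comm]

lemma gaussConv_const (hσ : 0 < σ) (c y : ℝ) : gaussConv σ (fun _ => c) y = c := by
  rw [gaussConv, integral_mul_const, integral_gq_sub hσ, one_mul]

lemma gaussConv_mono (hσ : 0 < σ) (hf : BddMeasurable f) (hg : BddMeasurable g)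
    (hfg : ∀ z, f z ≤ g z) (y : ℝ) : gaussConv σ f y ≤ gaussConv σ g y :=
  integral_mono (integrable_gq_mul hσ hf y) (integrable_gq_mul hσ hg y) fun z =>
    mul_le_mul_of_nonneg_left (hfg z) (gq_pos hσ _).le

lemma gaussConv_mem_Icc (hσ : 0 < σ) (hf : Measurable f) {a b : ℝ} (h : ∀ z, f z ∈ Icc a b)
    (y : ℝ) : gaussConv σ f y ∈ Icc a b := by
  have hfb := BddMeasurable.of_mem_Icc hf h
  rw [← gaussConv_const hσ a y, ← gaussConv_const hσ b y]
  exact ⟨gaussConv_mono hσ (.const a) hfb (fun z => (h z).1) y,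
    gaussConv_mono hσ hfb (.const b) (fun z => (h z).2) y⟩

lemma gaussConv_pos (hσ : 0 < σ) (hf : BddMeasurable f) (h0 : ∀ z, 0 < f z) (y : ℝ) :
    0 < gaussConv σ f y := by
  have hpos : ∀ z, 0 < gq σ (y - z) * f z := fun z => mul_pos (gq_pos hσ _) (h0 z)
  refine (integral_pos_iff_support_of_nonneg (fun z => (hpos z).le)
    (integrable_gq_mul hσ hf y)).2 ?_
  rw [Function.support_eq_univ fun z => (hpos z).ne']
  exact Measure.measure_univ_pos.2 NeZero.out

lemma gaussConv_le_of_le_on_Icc (hσ : 0 < σ) (hf : BddMeasurable f) {c K d y : ℝ} (hd : 0 ≤ d)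
    (hc : ∀ z ∈ Icc (y - d) (y + d), f z ≤ c) (hK : 0 ≤ K) (hcK : ∀ z, f z ≤ c + K) :
    gaussConv σ f y ≤ c + K * gaussTail σ d := by
  set W := Icc (y - d) (y + d)
  have hW : MeasurableSet Wᶜ := measurableSet_Icc.compl
  have hconst : Integrable fun z => gq σ (y - z) * c := (integrable_gq_sub hσ y).mul_const c
  have hind : Integrable (Wᶜ.indicator fun z => gq σ (y - z) * K) :=
    ((integrable_gq_sub hσ y).mul_const K).indicator hW
  have hpoint : ∀ z, gq σ (y - z) * f z ≤
      gq σ (y - z) * c + Wᶜ.indicator (fun z => gq σ (y - z) * K) z := fun z => by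
    by_cases hz : z ∈ W
    · simpa [hz] using mul_le_mul_of_nonneg_left (hc z hz) (gq_pos hσ (y - z)).le
    · simpa [hz, mul_add] using mul_le_mul_of_nonneg_left (hcK z) (gq_pos hσ (y - z)).le
  calc gaussConv σ f y
      ≤ ∫ z, (gq σ (y - z) * c + Wᶜ.indicator (fun z => gq σ (y - z) * K) z) :=
        integral_mono (integrable_gq_mul hσ hf y) (hconst.add hind) hpoint
    _ = c + K * ∫ z in Wᶜ, gq σ (y - z) := by
        rw [integral_add hconst hind, integral_mul_const, integral_gq_sub hσ, one_mul,
          integral_indicator hW, integral_mul_const, mul_comm]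
    _ ≤ c + K * gaussTail σ d := by
        gcongr
        exact setIntegral_compl_Icc_gq_le hσ hd y

lemma le_gaussConv_of_le_on_Icc (hσ : 0 < σ) (hf : BddMeasurable f) {c K d y : ℝ} (hd : 0 ≤ d)
    (hc : ∀ z ∈ Icc (y - d) (y + d), c ≤ f z) (hK : 0 ≤ K) (hcK : ∀ z, c - K ≤ f z) :
    c - K * gaussTail σ d ≤ gaussConv σ f y := by
  have := gaussConv_le_of_le_on_Icc hσ hf.neg (c := -c) hd (fun z hz => neg_le_neg (hc z hz)) hK
    fun z => by linarith [hcK z]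
  rw [gaussConv_neg] at this
  linarith

lemma gq_le_mul_gq_of_abs_sub_le_one (hσ : 0 < σ) {x x' : ℝ} (h : |x - x'| ≤ 1) :
    gq σ x ≤ √2 * Real.exp (1 / (2 * σ ^ 2)) * gq (√2 * σ) x' := by
  have hsq : (x - x') ^ 2 ≤ 1 := (sq_le_one_iff_abs_le_one _).2 h
  have hexponent : x' ^ 2 / (4 * σ ^ 2) - x ^ 2 / (2 * σ ^ 2) ≤ 1 / (2 * σ ^ 2) := by
    rw [div_sub_div _ _ (by positivity) (by positivity), div_le_div_iff₀ (by positivity)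
      (by positivity)]
    have : x' ^ 2 ≤ 2 * x ^ 2 + 2 := by nlinarith [sq_nonneg (x + (x - x'))]
    nlinarith [mul_le_mul_of_nonneg_left this (by positivity : 0 ≤ 4 * σ ^ 4)]
  rw [gq_eq_mul_gq_sqrt_two_mul hσ x x']
  have := (gq_pos (σ := √2 * σ) (by positivity) x').le
  gcongr

lemma tendsto_integral_abs_gq_add_sub (hσ : 0 < σ) :
    Tendsto (fun s => ∫ t, |gq σ (t + s) - gq σ t|) (nhds 0) (nhds 0) := by
  have hcont := continuous_gq σ
  have h2σ : 0 < √2 * σ := by positivity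
  have hint := integrable_gq_sub h2σ 0
  simp only [gq_neg, zero_sub] at hint
  set C := √2 * Real.exp (1 / (2 * σ ^ 2))
  have key : ContinuousAt (fun s => ∫ t, |gq σ (t + s) - gq σ t|) 0 := by
    refine continuousAt_of_dominated (bound := fun t => C * gq (√2 * σ) t + C * gq (√2 * σ) t)
      (.of_forall fun s => by fun_prop) ?_ ((hint.const_mul _).add (hint.const_mul _))
      (.of_forall fun t => by fun_prop)
    filter_upwards [Metric.closedBall_mem_nhds (0 : ℝ) one_pos] with s hs
    refine .of_forall fun t => ?_
    rw [Metric.mem_closedBall, dist_zero_right, Real.norm_eq_abs] at hs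
    have h1 : gq σ (t + s) ≤ C * gq (√2 * σ) t :=
      gq_le_mul_gq_of_abs_sub_le_one hσ (by rwa [add_sub_cancel_left])
    have h2 : gq σ t ≤ C * gq (√2 * σ) t := gq_le_mul_gq_of_abs_sub_le_one hσ (by simp)
    rw [Real.norm_eq_abs, abs_abs]
    refine (abs_sub _ _).trans ?_
    rw [abs_of_pos (gq_pos hσ _), abs_of_pos (gq_pos hσ _)]
    exact add_le_add h1 h2
  simpa [ContinuousAt] using key

lemma abs_gaussConv_sub_le (hσ : 0 < σ) (hf : Measurable f) {C : ℝ} (hC : ∀ z, |f z| ≤ C)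
    (y y' : ℝ) :
    |gaussConv σ f y' - gaussConv σ f y| ≤ (∫ t, |gq σ (t + (y' - y)) - gq σ t|) * C := by
  have hfb : BddMeasurable f := ⟨hf, C, hC⟩
  have hint : Integrable fun z => |gq σ (y' - z) - gq σ (y - z)| * C :=
    ((integrable_gq_sub hσ y').sub (integrable_gq_sub hσ y)).abs.mul_const C
  calc |gaussConv σ f y' - gaussConv σ f y|
      = |∫ z, (gq σ (y' - z) * f z - gq σ (y - z) * f z)| := by
        rw [integral_sub (integrable_gq_mul hσ hfb y') (integrable_gq_mul hσ hfb y), gaussConv,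
          gaussConv]
    _ ≤ ∫ z, |gq σ (y' - z) - gq σ (y - z)| * C := by
        refine (Real.norm_eq_abs _).symm.trans_le
          (norm_integral_le_of_norm_le hint (.of_forall fun z => ?_))
        rw [← sub_mul, Real.norm_eq_abs, abs_mul]
        exact mul_le_mul_of_nonneg_left (hC z) (abs_nonneg _)
    _ = (∫ t, |gq σ (t + (y' - y)) - gq σ t|) * C := by
        rw [integral_mul_const, ← integral_sub_left_eq_self
          (fun t => |gq σ (t + (y' - y)) - gq σ t|) volume y]
        simp only [sub_add_sub_cancel']

lemma uniformContinuous_gaussConv (hσ : 0 < σ) (hf : BddMeasurable f) :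
    UniformContinuous (gaussConv σ f) := by
  obtain ⟨C, hC⟩ := hf.bounded
  have hlim := (tendsto_integral_abs_gq_add_sub hσ).mul_const C
  rw [zero_mul] at hlim
  refine Metric.uniformContinuous_iff.2 fun ε hε => ?_
  obtain ⟨δ, hδ, hball⟩ := Metric.eventually_nhds_iff.1 (hlim.eventually (gt_mem_nhds hε))
  refine ⟨δ, hδ, fun {y' y} hy => (abs_gaussConv_sub_le hσ hf.measurable hC y y').trans_lt ?_⟩
  exact hball (by rwa [dist_zero_right, Real.norm_eq_abs, ← Real.dist_eq])

end gaussConv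

/-! ### Running means -/

/-- The running mean `x⁻¹ ∫₀ˣ g` of a function on the half line (equal to `0` at `x = 0`). -/
noncomputable def runningMean (g : ℝ → ℝ) (x : ℝ) : ℝ := (∫ y in (0 : ℝ)..x, g y) / x

section runningMean
variable {g : ℝ → ℝ} {x z : ℝ}

lemma mul_runningMean (hx : x ≠ 0) : x * runningMean g x = ∫ y in (0 : ℝ)..x, g y :=
  mul_div_cancel₀ _ hx

lemma hasDerivAt_runningMean (hg : Continuous g) (hx : x ≠ 0) :
    HasDerivAt (runningMean g) ((g x - runningMean g x) / x) x := by
  refine ((hg.integral_hasStrictDerivAt 0 x).hasDerivAt.div (hasDerivAt_id x) hx).congr_deriv ?_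
  rw [runningMean, id]
  field_simp

lemma monotone_integral_of_nonneg (hg : Continuous g) (h0 : ∀ y, 0 ≤ g y) :
    Monotone fun x => ∫ y in (0 : ℝ)..x, g y := by
  refine monotone_of_deriv_nonneg
    (fun x => (hg.integral_hasStrictDerivAt 0 x).hasDerivAt.differentiableAt) fun x => ?_
  rw [(hg.integral_hasStrictDerivAt 0 x).hasDerivAt.deriv]
  exact h0 x

lemma runningMean_nonneg (h0 : ∀ y, 0 ≤ g y) (hx : 0 ≤ x) : 0 ≤ runningMean g x :=
  div_nonneg (intervalIntegral.integral_nonneg hx fun y _ => h0 y) hx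

lemma mul_runningMean_le_mul_runningMean (hg : Continuous g) (h0 : ∀ y, 0 ≤ g y) (hx : 0 < x)
    (hxz : x ≤ z) : x * runningMean g x ≤ z * runningMean g z := by
  rw [mul_runningMean hx.ne', mul_runningMean (hx.trans_le hxz).ne']
  exact monotone_integral_of_nonneg hg h0 hxz

lemma integral_sub_integral_mem_Icc (hg : Continuous g) {G : ℝ} (h0 : ∀ y, 0 ≤ g y) (hxz : x ≤ z)
    (hG : ∀ y ∈ Icc x z, g y ≤ G) :
    (∫ y in (0 : ℝ)..z, g y) - ∫ y in (0 : ℝ)..x, g y ∈ Icc 0 (G * (z - x)) := by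
  rw [intervalIntegral.integral_interval_sub_left (hg.intervalIntegrable _ _)
    (hg.intervalIntegrable _ _)]
  refine ⟨intervalIntegral.integral_nonneg hxz fun y _ => h0 y, ?_⟩
  have := intervalIntegral.integral_mono_on hxz (hg.intervalIntegrable _ _)
    (intervalIntegrable_const (μ := volume) (c := G)) hG
  rwa [intervalIntegral.integral_const, smul_eq_mul, mul_comm] at this

end runningMean

lemma sub_le_mul_sub_of_hasDerivAt_le {f f' : ℝ → ℝ} {a b C : ℝ} (hab : a ≤ b)
    (hf : ∀ x ∈ Icc a b, HasDerivAt f (f' x) x) (hC : ∀ x ∈ Icc a b, f' x ≤ C) :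
    f b - f a ≤ C * (b - a) := by
  refine (convex_Icc a b).image_sub_le_mul_sub_of_deriv_le
    (fun x hx => (hf x hx).continuousAt.continuousWithinAt)
    (fun x hx => (hf x (interior_subset hx)).differentiableAt.differentiableWithinAt)
    (fun x hx => ?_) a (left_mem_Icc.2 hab) b (right_mem_Icc.2 hab) hab
  rw [(hf x (interior_subset hx)).deriv]
  exact hC x (interior_subset hx)

lemma pos_of_deriv_pos_at_first_zero {f f' : ℝ → ℝ} {a : ℝ}
    (hf : ∀ x, a ≤ x → HasDerivAt f (f' x) x) (ha : 0 < f a)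
    (h : ∀ x, a < x → f x = 0 → (∀ y ∈ Ico a x, 0 < f y) → 0 < f' x) :
    ∀ x, a ≤ x → 0 < f x := by
  by_contra! ⟨b, hab, hb⟩
  have hcont : ContinuousOn f (Icc a b) := fun x hx =>
    (hf x hx.1).continuousAt.continuousWithinAt
  obtain ⟨t, ⟨htab, hft⟩, htmin⟩ := (isCompact_Icc.of_isClosed_subset
    (hcont.preimage_isClosed_of_isClosed isClosed_Icc isClosed_Iic)
    inter_subset_left).exists_isLeast ⟨b, ⟨hab, le_rfl⟩, hb⟩
  have hpos : ∀ y ∈ Ico a t, 0 < f y := fun y hy => not_le.1 fun hy0 =>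
    hy.2.not_ge (htmin ⟨⟨hy.1, hy.2.le.trans htab.2⟩, hy0⟩)
  have hat : a < t := htab.1.lt_of_ne fun h => (h ▸ ha).not_ge hft
  have hleft : ∀ᶠ y in nhdsWithin t (Iio t), y < t ∧ 0 < f y := by
    filter_upwards [Ioo_mem_nhdsLT hat] with y hy using ⟨hy.2, hpos y ⟨hy.1.le, hy.2⟩⟩
  have hft0 : f t = 0 := le_antisymm hft <| ge_of_tendsto
    ((hf t htab.1).continuousAt.mono_left nhdsWithin_le_nhds) (hleft.mono fun y hy => hy.2.le)
  have hslope : Tendsto (slope f t) (nhdsWithin t (Iio t)) (nhds (f' t)) :=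
    (hasDerivAt_iff_tendsto_slope.1 (hf t htab.1)).mono_left
      (nhdsWithin_mono _ fun y hy => (mem_Iio.1 hy).ne)
  refine (h t hat hft0 hpos).not_ge (le_of_tendsto hslope (hleft.mono fun y hy => ?_))
  rw [slope_def_field, hft0, sub_zero]
  exact div_nonpos_of_nonneg_of_nonpos hy.2.le (sub_nonpos.2 hy.1.le)

lemma eventually_nonpos_of_deriv_le_neg {f f' : ℝ → ℝ} {a k : ℝ} (hk : 0 < k)
    (hf : ∀ x, a ≤ x → HasDerivAt f (f' x) x) (hstep : ∀ x, a ≤ x → 0 ≤ f x → f' x ≤ -k) :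
    ∀ᶠ x in atTop, f x ≤ 0 := by
  obtain ⟨b, hab, hb⟩ : ∃ b, a ≤ b ∧ f b < 0 := by
    by_contra! hnonneg
    set c := a + (f a + k) / k
    have hac : a ≤ c := le_add_of_nonneg_right
      (div_nonneg (add_nonneg (hnonneg a le_rfl) hk.le) hk.le)
    have hlin := sub_le_mul_sub_of_hasDerivAt_le hac (fun x hx => hf x hx.1)
      fun x hx => hstep x hx.1 (hnonneg x hx.1)
    have hdrop : k * (c - a) = f a + k := by simp only [c]; field_simp; ring
    linarith [hnonneg c hac]
  have hneg := pos_of_deriv_pos_at_first_zero (f := fun x => -f x) (f' := fun x => -f' x)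
    (fun x hx => (hf x (hab.trans hx)).neg) (neg_pos.2 hb) fun x hx h0 _ => by
      linarith [hstep x (hab.trans hx.le) (neg_eq_zero.1 h0).ge]
  filter_upwards [eventually_ge_atTop b] with x hx
  exact (neg_pos.1 (hneg x hx)).le

lemma eventually_runningMean_le {g : ℝ → ℝ} (hg : Continuous g) {c k : ℝ} (hk : 0 < k)
    (h : ∀ᶠ x in atTop, c ≤ runningMean g x → g x ≤ c - k) :
    ∀ᶠ x in atTop, runningMean g x ≤ c := by
  obtain ⟨a, ha⟩ := eventually_atTop.1 (h.and (eventually_gt_atTop 0))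
  have hev := eventually_nonpos_of_deriv_le_neg hk (a := a)
    (f := fun x => (∫ y in (0 : ℝ)..x, g y) - x * c) (f' := fun x => g x - 1 * c)
    (fun x _ => (hg.integral_hasStrictDerivAt 0 x).hasDerivAt.fun_sub
      ((hasDerivAt_id' x).mul_const c))
    (fun x hx h0 => by
      obtain ⟨hstep, hx0⟩ := ha x hx
      rw [← mul_runningMean hx0.ne', ← mul_sub] at h0
      linarith [hstep (sub_nonneg.1 (nonneg_of_mul_nonneg_right h0 hx0))])
  filter_upwards [hev, eventually_gt_atTop 0] with x h0 hx
  rw [← mul_runningMean hx.ne', ← mul_sub] at h0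
  exact sub_nonpos.1 (nonpos_of_mul_nonpos_right h0 hx)

section Kernel
variable {σ : ℝ} {a b φ : ℝ → ℝ}

lemma aestronglyMeasurable_of_gq_mul (hσ : 0 < σ) {y : ℝ}
    (h : AEStronglyMeasurable fun z => gq σ (y - z) * a z) : AEStronglyMeasurable a := by
  have hinv : Continuous fun z => (gq σ (y - z))⁻¹ :=
    ((continuous_gq σ).comp (continuous_const.sub continuous_id)).inv₀ fun z => (gq_pos hσ _).ne'
  exact (hinv.aestronglyMeasurable.mul h).congr
    (.of_forall fun z => inv_mul_cancel_left₀ (gq_pos hσ _).ne' _)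

lemma measurable_uncurry_gq_mul (hφ : Measurable φ) :
    Measurable (Function.uncurry fun y z => gq σ (y - z) * φ z) :=
  ((continuous_gq σ).measurable.comp (measurable_fst.sub measurable_snd)).mul
    (hφ.comp measurable_snd)

/-- If `a` is not almost everywhere measurable, none of the integrands is integrable and
`gaussConv σ a` takes the default value `0` of the integral. -/
lemma measurable_gaussConv (hσ : 0 < σ) (a : ℝ → ℝ) : Measurable (gaussConv σ a) := by
  by_cases ha : AEStronglyMeasurable a
  · have hmk : gaussConv σ a = gaussConv σ (ha.mk a) := funext fun y =>
      integral_congr_ae (ha.ae_eq_mk.mono fun z hz => congrArg (gq σ (y - z) * ·) hz)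
    rw [hmk]
    exact (measurable_uncurry_gq_mul
      ha.stronglyMeasurable_mk.measurable).stronglyMeasurable.integral_prod_right.measurable
  · have hzero : gaussConv σ a = 0 := funext fun y => integral_undef fun h =>
      ha (aestronglyMeasurable_of_gq_mul hσ h.aestronglyMeasurable)
    exact hzero ▸ measurable_const

/-- Where `gq σ (x - ·) * b` is not integrable, the quotient is `0` by convention. -/
lemma abs_gaussConv_div_le (hσ : 0 < σ) {C : ℝ} (hC : 0 ≤ C) (hb : ∀ z, 0 ≤ b z)
    (hab : ∀ z, |a z| ≤ C * b z) (x : ℝ) : |gaussConv σ a x / gaussConv σ b x| ≤ C := by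
  by_cases hint : Integrable fun z => gq σ (x - z) * b z
  · have hnum : |gaussConv σ a x| ≤ C * gaussConv σ b x := by
      rw [gaussConv, gaussConv, ← integral_const_mul]
      refine (Real.norm_eq_abs _).symm.trans_le
        (MeasureTheory.norm_integral_le_of_norm_le (hint.const_mul C) (.of_forall fun z => ?_))
      rw [Real.norm_eq_abs, abs_mul, abs_of_pos (gq_pos hσ _), mul_left_comm]
      exact mul_le_mul_of_nonneg_left (hab z) (gq_pos hσ _).le
    have hden : 0 ≤ gaussConv σ b x :=
      integral_nonneg fun z => mul_nonneg (gq_pos hσ _).le (hb z)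
    rw [abs_div, abs_of_nonneg hden]
    exact div_le_of_le_mul₀ hden hC hnum
  · rwa [show gaussConv σ b x = 0 from integral_undef hint, div_zero, abs_zero]

lemma gaussConv_div_mem_Icc (hσ : 0 < σ) {m M : ℝ} (ha : BddMeasurable a) (hb : BddMeasurable b)
    (hb0 : ∀ z, 0 < b z) (hab : ∀ z, a z ∈ Icc (m * b z) (M * b z)) (x : ℝ) :
    gaussConv σ a x / gaussConv σ b x ∈ Icc m M := by
  have hpos := gaussConv_pos hσ hb hb0 x
  rw [mem_Icc, le_div_iff₀ hpos, div_le_iff₀ hpos, ← gaussConv_const_mul, ← gaussConv_const_mul]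
  exact ⟨gaussConv_mono hσ ((BddMeasurable.const m).mul hb) ha (fun z => (hab z).1) x,
    gaussConv_mono hσ ha ((BddMeasurable.const M).mul hb) (fun z => (hab z).2) x⟩

lemma integrable_uncurry_gq_mul (hσ : 0 < σ) (hφ : BddMeasurable φ) (a b : ℝ) :
    Integrable (Function.uncurry fun y z => gq σ (y - z) * φ z)
      ((volume.restrict (uIoc a b)).prod volume) := by
  have : IsFiniteMeasure (volume.restrict (uIoc a b)) := by unfold uIoc; infer_instance
  obtain ⟨C, hC⟩ := hφ.bounded
  have habs : ∀ y, ∫ z, ‖gq σ (y - z) * φ z‖ = gaussConv σ (fun z => |φ z|) y := fun y =>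
    integral_congr_ae <| .of_forall fun z => by
      simp only [norm_mul, Real.norm_eq_abs, abs_of_pos (gq_pos hσ (y - z))]
  refine (integrable_prod_iff
    (measurable_uncurry_gq_mul hφ.measurable).aestronglyMeasurable).2
      ⟨.of_forall fun y => integrable_gq_mul hσ hφ y, ?_⟩
  simp only [Function.uncurry_apply_pair, habs]
  exact .of_mem_Icc 0 C (measurable_gaussConv hσ _).aemeasurable <| .of_forall fun y =>
    gaussConv_mem_Icc hσ (f := fun z => |φ z|) hφ.measurable.abs
      (fun z => ⟨abs_nonneg _, hC z⟩) y

lemma gqbar_mul_eq {x : ℝ} (hx : x ≠ 0) (z : ℝ) :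
    gqbar σ x z * φ z = (∫ y in (0 : ℝ)..x, gq σ (y - z) * φ z) / x := by
  rw [gqbar, if_neg hx, intervalIntegral.integral_mul_const, one_div_mul_eq_div, div_mul_eq_mul_div]

lemma integrable_gqbar_mul (hσ : 0 < σ) (hφ : BddMeasurable φ) {x : ℝ} (hx : x ≠ 0) :
    Integrable fun z => gqbar σ x z * φ z := by
  simp only [gqbar_mul_eq hx, intervalIntegral.intervalIntegral_eq_integral_uIoc]
  exact ((integrable_uncurry_gq_mul hσ hφ 0 x).integral_prod_right.smul (_ : ℝ)).div_const x

lemma integral_gqbar_mul (hσ : 0 < σ) (hφ : BddMeasurable φ) {x : ℝ} (hx : x ≠ 0) :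
    ∫ z, gqbar σ x z * φ z = runningMean (gaussConv σ φ) x := by
  simp only [gqbar_mul_eq hx]
  rw [integral_div, ← intervalIntegral_integral_swap (integrable_uncurry_gq_mul hσ hφ 0 x)]
  rfl

end Kernel

lemma measurable_runningMean {g : ℝ → ℝ} (hg : Continuous g) : Measurable (runningMean g) :=
  (intervalIntegral.continuous_primitive (fun a b => hg.intervalIntegrable a b) 0).measurable.div
    measurable_id

lemma runningMean_const_sub {g : ℝ → ℝ} (hg : Continuous g) (c : ℝ) {x : ℝ} (hx : x ≠ 0) :
    runningMean (fun y => c - g y) x = c - runningMean g x := by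
  rw [runningMean, runningMean, intervalIntegral.integral_sub intervalIntegrable_const
    (hg.intervalIntegrable _ _), intervalIntegral.integral_const, smul_eq_mul, sub_zero, sub_div,
    mul_div_cancel_left₀ _ hx]

/-! ### Tail profiles and the tail equation -/

/-- The tail data of a law bounded above by `M`, in the distance `v = M - x` to the endpoint:
`p v` stands for `Π⁺ (M - v)` and `S v` for `M - Ψ⁺ (M - v)`, the mean distance to `M` beyond
`M - v`. -/
structure TailProfile (p S : ℝ → ℝ) : Prop where
  p_pos : ∀ v, 0 < v → 0 < p v
  p_le_one : ∀ v, 0 < v → p v ≤ 1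
  p_mono : MonotoneOn p (Ioi 0)
  S_nonneg : ∀ v, 0 < v → 0 ≤ S v
  S_mono : MonotoneOn S (Ioi 0)
  S_gap : ∀ b v, 0 < b → b ≤ v → S v ≤ v - (v - b) * p b

namespace TailProfile
variable {p S : ℝ → ℝ}

lemma S_lt (hT : TailProfile p S) {v : ℝ} (hv : 0 < v) : S v < v := by
  have hgap := hT.S_gap (v / 2) v (half_pos hv) (half_le_self hv.le)
  have hpos : 0 < (v - v / 2) * p (v / 2) :=
    mul_pos (sub_pos.2 (half_lt_self hv)) (hT.p_pos _ (half_pos hv))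
  linarith

lemma tendsto_S_zero (hT : TailProfile p S) : Tendsto S (nhdsWithin 0 (Ioi 0)) (nhds 0) :=
  squeeze_zero' (eventually_mem_nhdsWithin.mono fun v hv => hT.S_nonneg v hv)
    (eventually_mem_nhdsWithin.mono fun _ hv => (hT.S_lt hv).le)
    (tendsto_id.mono_left nhdsWithin_le_nhds)

end TailProfile

/-- A tail profile which is differentiable near the endpoint, with `S'` the derivative of `S` and
`L` its limit at the endpoint. The formula for the derivative of `log p` is the one that
`S v * p v = ∫₀ᵛ w dp(w)` imposes. -/
structure SmoothTailProfile (p S S' : ℝ → ℝ) (L : ℝ) : Prop extends TailProfile p S where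
  hasDerivAt_S : ∀ᶠ v in nhdsWithin 0 (Ioi 0), HasDerivAt S (S' v) v
  hasDerivAt_log_p : ∀ᶠ v in nhdsWithin 0 (Ioi 0),
    HasDerivAt (fun v => Real.log (p v)) (S' v / (v - S v)) v
  tendsto_S' : Tendsto S' (nhdsWithin 0 (Ioi 0)) (nhds L)

lemma exists_forall_Ioc_of_eventually_nhdsGT {P : ℝ → Prop}
    (h : ∀ᶠ v in nhdsWithin 0 (Ioi 0), P v) : ∃ v₀ > 0, ∀ v ∈ Ioc 0 v₀, P v := by
  obtain ⟨v₀, hv₀, hP⟩ := mem_nhdsGT_iff_exists_Ioc_subset.1 h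
  exact ⟨v₀, hv₀, fun v hv => hP hv⟩

namespace SmoothTailProfile
variable {p S S' : ℝ → ℝ} {L : ℝ}

lemma eventually_S'_mem (hR : SmoothTailProfile p S S' L) {ε : ℝ} (hε : 0 < ε) :
    ∀ᶠ v in nhdsWithin 0 (Ioi 0), S' v ∈ Icc (L - ε) (L + ε) :=
  hR.tendsto_S'.eventually (Icc_mem_nhds (sub_lt_self L hε) (lt_add_of_pos_right L hε))

lemma exists_S_sub_mem (hR : SmoothTailProfile p S S' L) {ε : ℝ} (hε : 0 < ε) :
    ∃ v₀ > 0, ∀ v w, 0 < v → v ≤ w → w ≤ v₀ →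
      S w - S v ∈ Icc ((L - ε) * (w - v)) ((L + ε) * (w - v)) := by
  obtain ⟨v₀, hv₀, h⟩ := exists_forall_Ioc_of_eventually_nhdsGT
    (hR.hasDerivAt_S.and (hR.eventually_S'_mem hε))
  refine ⟨v₀, hv₀, fun v w hv hvw hw => ?_⟩
  have hmem : ∀ t ∈ Icc v w, t ∈ Ioc 0 v₀ := fun t ht => ⟨hv.trans_le ht.1, ht.2.trans hw⟩
  have hupper := sub_le_mul_sub_of_hasDerivAt_le hvw (fun t ht => (h t (hmem t ht)).1)
    fun t ht => (h t (hmem t ht)).2.2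
  have hlower := sub_le_mul_sub_of_hasDerivAt_le hvw (C := -(L - ε))
    (fun t ht => (h t (hmem t ht)).1.neg) fun t ht => neg_le_neg (h t (hmem t ht)).2.1
  exact ⟨by simp only [Pi.neg_apply] at hlower; linarith, hupper⟩

lemma tendsto_S_div (hR : SmoothTailProfile p S S' L) :
    Tendsto (fun v => S v / v) (nhdsWithin 0 (Ioi 0)) (nhds L) := by
  refine Metric.tendsto_nhds.2 fun ε hε => ?_
  obtain ⟨v₀, hv₀, h⟩ := hR.exists_S_sub_mem (half_pos hε)
  filter_upwards [Ioc_mem_nhdsGT hv₀] with w hw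
  have hlin : Tendsto (fun v : ℝ => w - v) (nhdsWithin 0 (Ioi 0)) (nhds (w - 0)) :=
    (tendsto_const_nhds.sub tendsto_id).mono_left nhdsWithin_le_nhds
  have hSw : Tendsto (fun v => S w - S v) (nhdsWithin 0 (Ioi 0)) (nhds (S w - 0)) :=
    tendsto_const_nhds.sub hR.tendsto_S_zero
  have hbd : ∀ᶠ v in nhdsWithin 0 (Ioi 0),
      S w - S v ∈ Icc ((L - ε / 2) * (w - v)) ((L + ε / 2) * (w - v)) := by
    filter_upwards [Ioc_mem_nhdsGT hw.1] with v hv using h v w hv.1 hv.2 hw.2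
  have hlower := le_of_tendsto_of_tendsto (hlin.const_mul _) hSw (hbd.mono fun _ hv => hv.1)
  have hupper := le_of_tendsto_of_tendsto hSw (hlin.const_mul _) (hbd.mono fun _ hv => hv.2)
  rw [sub_zero, sub_zero] at hlower hupper
  rw [Real.dist_eq]
  refine (abs_sub_le_iff.2 ⟨?_, ?_⟩).trans_lt (half_lt_self hε)
  · rwa [sub_le_iff_le_add', div_le_iff₀ hw.1]
  · rwa [sub_le_comm, le_div_iff₀ hw.1]

lemma L_le_one (hR : SmoothTailProfile p S S' L) : L ≤ 1 :=
  le_of_tendsto hR.tendsto_S_div <| eventually_mem_nhdsWithin.mono fun _ hv =>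
    (div_le_one hv).2 (hR.S_lt hv).le

lemma L_nonneg (hR : SmoothTailProfile p S S' L) : 0 ≤ L :=
  ge_of_tendsto hR.tendsto_S_div <| eventually_mem_nhdsWithin.mono fun v hv =>
    div_nonneg (hR.S_nonneg v hv) (le_of_lt hv)

lemma exists_S_sub_le (hR : SmoothTailProfile p S S' L) :
    ∃ v₀ > 0, ∀ v w, 0 < v → v ≤ w → w ≤ v₀ → S w - S v ≤ 3 / 2 * (w - v) := by
  obtain ⟨v₀, hv₀, h⟩ := hR.exists_S_sub_mem one_half_pos
  refine ⟨v₀, hv₀, fun v w hv hvw hw => (h v w hv hvw hw).2.trans ?_⟩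
  gcongr
  linarith [hR.L_le_one]

end SmoothTailProfile

lemma mul_gq_le_gaussConv {σ : ℝ} (hσ : 0 < σ) {f : ℝ → ℝ} (hf : BddMeasurable f)
    (h0 : ∀ z, 0 ≤ f z) {q ρ R x y : ℝ} (hq : 0 ≤ q) (hρ : 0 ≤ ρ)
    (hfq : ∀ z ∈ Icc x (x + ρ), q ≤ f z) (hy : |y - x| ≤ R) :
    q * ρ * gq σ (R + ρ) ≤ gaussConv σ f y := by
  have hint := integrable_gq_mul hσ hf y
  calc q * ρ * gq σ (R + ρ) = ∫ _ in Icc x (x + ρ), gq σ (R + ρ) * q := by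
        rw [setIntegral_const, Real.volume_real_Icc, add_sub_cancel_left, max_eq_left hρ,
          smul_eq_mul]
        ring
    _ ≤ ∫ z in Icc x (x + ρ), gq σ (y - z) * f z := by
        refine setIntegral_mono_on continuous_const.integrableOn_Icc hint.integrableOn
          measurableSet_Icc fun z hz => ?_
        refine mul_le_mul (gq_le_gq_of_sq_le hσ (sq_le_sq.2 ?_)) (hfq z hz) hq (gq_pos hσ _).le
        rw [abs_le] at hy
        exact (abs_le.2 ⟨by linarith [hz.2], by linarith [hz.1]⟩).trans (le_abs_self _)
    _ ≤ gaussConv σ f y := setIntegral_le_integral hint <|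
        .of_forall fun z => mul_nonneg (gq_pos hσ _).le (h0 z)

/-- The fixed point equation on the half line, written for the distances `u = M - F` and
`h = M - φ_F` to the endpoint `M`; `g` is the smoothing of `h`, `θ` stands for `1 / N`, and `H` is a
bound for the distances. -/
structure TailEquation (σ H θ : ℝ) (p S u h g : ℝ → ℝ) : Prop extends TailProfile p S where
  σ_pos : 0 < σ
  θ_pos : 0 < θ
  θ_le : θ ≤ 1 / 2
  u_pos : ∀ x, 0 < u x
  u_le : ∀ x, u x ≤ H
  measurable_p_u : Measurable fun z => p (u z)
  measurable_S_u : Measurable fun z => S (u z)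
  measurable_h : Measurable h
  h_mem : ∀ z, h z ∈ Icc 0 H
  g_eq : g = gaussConv σ h
  h_eq : ∀ y, 0 ≤ y →
    h y = gaussConv σ (fun z => S (u z) * p (u z)) y / gaussConv σ (fun z => p (u z)) y
  u_eq : ∀ x, 0 < x → u x = θ * g x + (1 - θ) * runningMean g x

namespace TailEquation
variable {σ H θ : ℝ} {p S u h g : ℝ → ℝ}

lemma H_pos (c : TailEquation σ H θ p S u h g) : 0 < H := (c.u_pos 0).trans_le (c.u_le 0)

lemma p_u_mem (c : TailEquation σ H θ p S u h g) (z : ℝ) : p (u z) ∈ Icc 0 1 :=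
  ⟨(c.p_pos _ (c.u_pos z)).le, c.p_le_one _ (c.u_pos z)⟩

lemma bddMeasurable_p_u (c : TailEquation σ H θ p S u h g) : BddMeasurable fun z => p (u z) :=
  .of_mem_Icc c.measurable_p_u c.p_u_mem

lemma S_u_mem (c : TailEquation σ H θ p S u h g) (z : ℝ) : S (u z) ∈ Icc 0 H :=
  ⟨c.S_nonneg _ (c.u_pos z), (c.S_lt (c.u_pos z)).le.trans (c.u_le z)⟩

lemma bddMeasurable_S_u (c : TailEquation σ H θ p S u h g) : BddMeasurable fun z => S (u z) :=
  .of_mem_Icc c.measurable_S_u c.S_u_mem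

lemma gaussConv_p_u_pos (c : TailEquation σ H θ p S u h g) (y : ℝ) :
    0 < gaussConv σ (fun z => p (u z)) y :=
  gaussConv_pos c.σ_pos c.bddMeasurable_p_u (fun z => c.p_pos _ (c.u_pos z)) y

lemma h_sub_eq (c : TailEquation σ H θ p S u h g) (s : ℝ) {y : ℝ} (hy : 0 ≤ y) :
    h y - s = gaussConv σ (fun z => (S (u z) - s) * p (u z)) y /
      gaussConv σ (fun z => p (u z)) y := by
  have hp := c.bddMeasurable_p_u
  simp only [sub_mul]
  rw [c.h_eq y hy, gaussConv_sub c.σ_pos (c.bddMeasurable_S_u.mul hp)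
    ((BddMeasurable.const s).mul hp), gaussConv_const_mul, sub_div,
    mul_div_cancel_right₀ _ (c.gaussConv_p_u_pos y).ne']

lemma h_lower (c : TailEquation σ H θ p S u h g) {y d v : ℝ} (hy : 0 ≤ y) (hd : 0 ≤ d)
    (hτ : gaussTail σ d ≤ 1 / 2) (hv : 0 < v) (huv : ∀ z ∈ Icc (y - d) (y + d), v ≤ u z) :
    S v - 2 * gaussTail σ d * S v ≤ h y := by
  have hpv := c.p_pos v hv
  have hSv := c.S_nonneg v hv
  have hp := c.bddMeasurable_p_u
  have hmono : ∀ z, v ≤ u z → S v ≤ S (u z) := fun z hz => c.S_mono hv (c.u_pos z) hz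
  have hnum : 0 - S v * p v * gaussTail σ d ≤
      gaussConv σ (fun z => (S (u z) - S v) * p (u z)) y := by
    refine le_gaussConv_of_le_on_Icc c.σ_pos ((c.bddMeasurable_S_u.sub (.const _)).mul hp) hd
      (fun z hz => mul_nonneg (sub_nonneg.2 (hmono z (huv z hz))) (c.p_u_mem z).1)
      (mul_nonneg hSv hpv.le) fun z => ?_
    rcases le_total v (u z) with hz | hz
    · nlinarith [mul_nonneg (sub_nonneg.2 (hmono z hz)) (c.p_u_mem z).1, mul_nonneg hSv hpv.le]
    · nlinarith [mul_le_mul_of_nonneg_left (c.p_mono (c.u_pos z) hv hz) hSv,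
        mul_nonneg (c.S_u_mem z).1 (c.p_u_mem z).1]
  have hden : p v - p v * gaussTail σ d ≤ gaussConv σ (fun z => p (u z)) y :=
    le_gaussConv_of_le_on_Icc c.σ_pos hp hd (fun z hz => c.p_mono hv (c.u_pos z) (huv z hz))
      hpv.le fun z => by linarith [(c.p_u_mem z).1]
  have hden' : p v / 2 ≤ gaussConv σ (fun z => p (u z)) y := by nlinarith
  have hquot : -(2 * gaussTail σ d * S v) ≤ h y - S v := by
    rw [c.h_sub_eq _ hy, le_div_iff₀ (c.gaussConv_p_u_pos y)]
    nlinarith [mul_le_mul_of_nonneg_left hden' (mul_nonneg (gaussTail_pos σ d).le hSv)]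
  linarith

lemma h_upper (c : TailEquation σ H θ p S u h g) {y d s D : ℝ} (hy : 0 ≤ y) (hd : 0 ≤ d)
    (hD : 0 < D) (hDy : D ≤ gaussConv σ (fun z => p (u z)) y) (hs0 : 0 ≤ s)
    (hs : ∀ z ∈ Icc (y - d) (y + d), S (u z) ≤ s) : h y ≤ s + H * gaussTail σ d / D := by
  have hτ := mul_nonneg c.H_pos.le (gaussTail_pos σ d).le
  have hnum : gaussConv σ (fun z => (S (u z) - s) * p (u z)) y ≤ 0 + H * gaussTail σ d := by
    refine gaussConv_le_of_le_on_Icc c.σ_pos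
      ((c.bddMeasurable_S_u.sub (.const _)).mul c.bddMeasurable_p_u) hd
      (fun z hz => mul_nonpos_of_nonpos_of_nonneg (sub_nonpos.2 (hs z hz)) (c.p_u_mem z).1)
      c.H_pos.le fun z => ?_
    nlinarith [(c.p_u_mem z).1, (c.p_u_mem z).2, (c.S_u_mem z).2, c.H_pos,
      mul_nonneg hs0 (c.p_u_mem z).1, mul_le_mul (c.S_u_mem z).2 (c.p_u_mem z).2
        (c.p_u_mem z).1 c.H_pos.le]
  rw [zero_add] at hnum
  rw [← sub_le_iff_le_add', c.h_sub_eq s hy]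
  exact div_le_div₀ hτ hnum hD hDy

lemma g_lower (c : TailEquation σ H θ p S u h g) {y d v : ℝ} (hd : 0 ≤ d) (hy : d ≤ y)
    (hτ : gaussTail σ d ≤ 1 / 2) (hv : 0 < v)
    (huv : ∀ z ∈ Icc (y - 2 * d) (y + 2 * d), v ≤ u z) :
    S v - 3 * gaussTail σ d * S v ≤ g y := by
  have hSv := c.S_nonneg v hv
  have hc : 0 ≤ S v - 2 * gaussTail σ d * S v := by nlinarith
  have hconv := le_gaussConv_of_le_on_Icc c.σ_pos
    (.of_mem_Icc c.measurable_h c.h_mem) (y := y) hd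
    (fun z hz => c.h_lower (by linarith [hz.1]) hd hτ hv fun w hw =>
      huv w ⟨by linarith [hw.1, hz.1], by linarith [hw.2, hz.2]⟩)
    hc fun z => by linarith [(c.h_mem z).1]
  rw [c.g_eq]
  nlinarith [mul_nonneg hSv (sq_nonneg (gaussTail σ d))]

lemma g_upper (c : TailEquation σ H θ p S u h g) {y d d' s D : ℝ} (hd : 0 ≤ d) (hd' : 0 ≤ d')
    (hy : d ≤ y) (hD : 0 < D)
    (hDy : ∀ z ∈ Icc (y - d) (y + d), D ≤ gaussConv σ (fun z => p (u z)) z) (hs0 : 0 ≤ s)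
    (hs : ∀ z ∈ Icc (y - (d + d')) (y + (d + d')), S (u z) ≤ s) :
    g y ≤ s + H * gaussTail σ d' / D + H * gaussTail σ d := by
  have hτ := mul_nonneg c.H_pos.le (gaussTail_pos σ d').le
  rw [c.g_eq]
  refine gaussConv_le_of_le_on_Icc c.σ_pos (.of_mem_Icc c.measurable_h c.h_mem) hd
    (fun z hz => c.h_upper (by linarith [hz.1]) hd' hD (hDy z hz) hs0 fun w hw =>
      hs w ⟨by linarith [hw.1, hz.1], by linarith [hw.2, hz.2]⟩)
    c.H_pos.le fun z => ?_
  linarith [(c.h_mem z).2, div_nonneg hτ hD.le]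

lemma g_mem (c : TailEquation σ H θ p S u h g) (y : ℝ) : g y ∈ Icc 0 H :=
  c.g_eq ▸ gaussConv_mem_Icc c.σ_pos c.measurable_h c.h_mem y

lemma uniformContinuous_g (c : TailEquation σ H θ p S u h g) : UniformContinuous g :=
  c.g_eq ▸ uniformContinuous_gaussConv c.σ_pos (.of_mem_Icc c.measurable_h c.h_mem)

lemma continuous_g (c : TailEquation σ H θ p S u h g) : Continuous g :=
  c.uniformContinuous_g.continuous

lemma mean_nonneg (c : TailEquation σ H θ p S u h g) {x : ℝ} (hx : 0 ≤ x) :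
    0 ≤ runningMean g x :=
  runningMean_nonneg (fun y => (c.g_mem y).1) hx

lemma mul_mean_mono (c : TailEquation σ H θ p S u h g) {x z : ℝ} (hx : 0 < x) (hxz : x ≤ z) :
    x * runningMean g x ≤ z * runningMean g z :=
  mul_runningMean_le_mul_runningMean c.continuous_g (fun y => (c.g_mem y).1) hx hxz

lemma mean_le_two_mul_u (c : TailEquation σ H θ p S u h g) {x : ℝ} (hx : 0 < x) :
    runningMean g x ≤ 2 * u x := by
  rw [c.u_eq x hx]
  nlinarith [c.θ_pos, c.θ_le, (c.g_mem x).1, c.mean_nonneg hx.le]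

lemma g_le_u_div (c : TailEquation σ H θ p S u h g) {x : ℝ} (hx : 0 < x) : g x ≤ u x / θ := by
  rw [le_div_iff₀ c.θ_pos, c.u_eq x hx]
  nlinarith [c.θ_pos, c.θ_le, c.mean_nonneg hx.le]

lemma exists_quarter_le_u (c : TailEquation σ H θ p S u h g) {δ : ℝ} (hδ : 0 < δ) :
    ∃ ρ > 0, ∀ y ≥ 1, δ ≤ u y → ∀ z ∈ Icc y (y + ρ), δ / 4 ≤ u z := by
  obtain ⟨ε, hε, hcont⟩ :=
    Metric.uniformContinuous_iff.1 c.uniformContinuous_g (δ / 2) (half_pos hδ)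
  refine ⟨min 1 (ε / 2), lt_min one_pos (half_pos hε), fun y hy hu z hz => ?_⟩
  have hz1 : z ≤ y + 1 := hz.2.trans (by gcongr; exact min_le_left _ _)
  have hzε : z ≤ y + ε / 2 := hz.2.trans (by gcongr; exact min_le_right _ _)
  have hgz : g y - δ / 2 ≤ g z := by
    have hdist : dist z y < ε := by
      rw [Real.dist_eq, abs_of_nonneg (sub_nonneg.2 hz.1)]; linarith
    linarith [(abs_lt.1 (hcont hdist)).1]
  have hAz : runningMean g y / 2 ≤ runningMean g z := by
    have hA := c.mean_nonneg (zero_le_one.trans hy)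
    nlinarith [c.mul_mean_mono (by linarith) hz.1, c.mean_nonneg (x := z) (by linarith [hz.1])]
  rw [c.u_eq y (by linarith)] at hu
  rw [c.u_eq z (by linarith [hz.1])]
  nlinarith [c.θ_pos, c.θ_le, (c.g_mem y).1, mul_le_mul_of_nonneg_left hgz c.θ_pos.le,
    mul_le_mul_of_nonneg_left hAz (by linarith [c.θ_le] : 0 ≤ 1 - θ)]

lemma eventually_g_le_of_le_u (c : TailEquation σ H θ p S u h g) {δ s k : ℝ} (hδ : 0 < δ)
    (hs0 : 0 ≤ s) (hk : 0 < k) (hs : ∀ᶠ z in atTop, S (u z) ≤ s) :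
    ∀ᶠ y in atTop, δ ≤ u y → g y ≤ s + k := by
  have hτ : ∀ D : ℝ, Tendsto (fun d => H * gaussTail σ d / D) atTop (nhds 0) := fun D => by
    simpa using ((tendsto_gaussTail c.σ_pos).const_mul H).div_const D
  obtain ⟨R, hRτ, hR⟩ := (((hτ 1).eventually (gt_mem_nhds (half_pos hk))).and
    (eventually_ge_atTop 0)).exists
  obtain ⟨ρ, hρ, hnear⟩ := c.exists_quarter_le_u hδ
  have hpδ := c.p_pos (δ / 4) (by positivity)
  have hD : 0 < p (δ / 4) * ρ * gq σ (R + ρ) := mul_pos (mul_pos hpδ hρ) (gq_pos c.σ_pos _)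
  obtain ⟨X, hX⟩ := eventually_atTop.1 hs
  have hquarter : Tendsto (fun y : ℝ => y / 4) atTop atTop :=
    tendsto_id.atTop_div_const four_pos
  have hfar := (hτ (p (δ / 4) * ρ * gq σ (R + ρ))).comp hquarter
  filter_upwards [hfar.eventually (gt_mem_nhds (half_pos hk)),
    eventually_ge_atTop 1, eventually_ge_atTop (4 * R), eventually_ge_atTop (2 * |X|)]
    with y hyτ hy1 hyR hyX hu
  have hden : ∀ z ∈ Icc (y - R) (y + R),
      p (δ / 4) * ρ * gq σ (R + ρ) ≤ gaussConv σ (fun z => p (u z)) z := fun z hz =>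
    mul_gq_le_gaussConv c.σ_pos c.bddMeasurable_p_u (fun w => (c.p_u_mem w).1) hpδ.le hρ.le
      (fun w hw => c.p_mono (mem_Ioi.2 (by positivity)) (c.u_pos w) (hnear y hy1 hu w hw))
      (abs_le.2 ⟨by linarith [hz.1], by linarith [hz.2]⟩)
  have := c.g_upper (d' := y / 4) hR (by positivity) (by linarith) hD hden hs0 fun z hz =>
    hX z (by linarith [hz.1, le_abs_self X])
  rw [div_one] at hRτ
  simp only [Function.comp_apply] at hyτ
  linarith

lemma exists_drop (c : TailEquation σ H θ p S u h g) {l : ℝ} (hl : 0 < l) :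
    ∃ k > 0, (∀ᶠ y in atTop, u y ≤ l + k) → ∀ᶠ y in atTop, u y ≤ l - k := by
  have hp0 := c.p_pos (l / 2) (half_pos hl)
  have hp1 := c.p_le_one (l / 2) (half_pos hl)
  obtain ⟨k, hk⟩ : ∃ k, k = l * p (l / 2) / 16 := ⟨_, rfl⟩
  have hk0 : 0 < k := by rw [hk]; positivity
  have hkl : k ≤ l / 16 := by rw [hk]; nlinarith
  have hS : S (l + k) ≤ l - 7 * k := by
    nlinarith [c.S_gap (l / 2) (l + k) (half_pos hl) (by linarith)]
  refine ⟨k, hk0, fun hev => ?_⟩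
  have hvis := c.eventually_g_le_of_le_u (δ := l / 4) (by positivity)
    (c.S_nonneg (l + k) (by positivity)) hk0
    (hev.mono fun z hz => c.S_mono (c.u_pos z) (mem_Ioi.2 (by positivity)) hz)
  have hmean := eventually_runningMean_le c.continuous_g (c := l - 3 * k) hk0 <| by
    filter_upwards [hvis, eventually_gt_atTop 0] with x hx hx0 hA
    linarith [c.mean_le_two_mul_u hx0, hx (by linarith [c.mean_le_two_mul_u hx0])]
  filter_upwards [hmean, hvis, eventually_gt_atTop 0] with x hA hg hx0
  rcases le_total (l / 4) (u x) with hu | hu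
  · rw [c.u_eq x hx0]
    nlinarith [hg hu, c.θ_pos, c.θ_le, mul_le_mul_of_nonneg_left (hg hu) c.θ_pos.le,
      mul_le_mul_of_nonneg_left hA (by linarith [c.θ_le] : 0 ≤ 1 - θ)]
  · linarith

lemma tendsto_u (c : TailEquation σ H θ p S u h g) : Tendsto u atTop (nhds 0) := by
  set T : Set ℝ := {l | ∀ᶠ y in atTop, u y ≤ l}
  have hpos : ∀ l ∈ T, 0 ≤ l := fun l hl => by
    obtain ⟨y, hy⟩ := hl.exists
    exact (c.u_pos y).le.trans hy
  have hne : T.Nonempty := ⟨H, .of_forall c.u_le⟩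
  have hinf : sInf T = 0 := by
    refine (le_csInf hne hpos).antisymm' (not_lt.1 fun hl => ?_)
    obtain ⟨k, hk, hdrop⟩ := c.exists_drop hl
    obtain ⟨l, hlT, hlk⟩ := exists_lt_of_csInf_lt hne (lt_add_of_pos_right _ hk)
    have := csInf_le ⟨0, hpos⟩ (hdrop (Eventually.mono hlT fun y hy => hy.trans hlk.le))
    linarith
  refine tendsto_order.2 ⟨fun a ha => .of_forall fun y => ha.trans (c.u_pos y), fun a ha => ?_⟩
  obtain ⟨l, hlT, hla⟩ := exists_lt_of_csInf_lt hne (hinf.trans_lt ha)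
  exact Eventually.mono hlT fun y hy => hy.trans_lt hla

lemma tendsto_u_nhdsGT (c : TailEquation σ H θ p S u h g) :
    Tendsto u atTop (nhdsWithin 0 (Ioi 0)) :=
  tendsto_nhdsWithin_iff.2 ⟨c.tendsto_u, .of_forall c.u_pos⟩

lemma tendsto_mean (c : TailEquation σ H θ p S u h g) : Tendsto (runningMean g) atTop (nhds 0) := by
  refine squeeze_zero' ((eventually_ge_atTop 0).mono fun x hx => c.mean_nonneg hx)
    ((eventually_gt_atTop 0).mono fun x hx => c.mean_le_two_mul_u hx) ?_
  simpa using c.tendsto_u.const_mul 2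

lemma tendsto_g (c : TailEquation σ H θ p S u h g) : Tendsto g atTop (nhds 0) := by
  refine squeeze_zero' (.of_forall fun x => (c.g_mem x).1)
    ((eventually_gt_atTop 0).mono fun x hx => c.g_le_u_div hx) ?_
  simpa using c.tendsto_u.div_const θ

lemma exists_pos_le_mul_mean (c : TailEquation σ H θ p S u h g) :
    ∃ b > 0, ∀ᶠ x in atTop, b ≤ x * runningMean g x := by
  obtain ⟨x, hx, hpos⟩ : ∃ x > 0, 0 < runningMean g x := by
    by_contra! hnonpos
    have hzero : ∀ x > 0, runningMean g x = 0 := fun x hx =>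
      (hnonpos x hx).antisymm (c.mean_nonneg hx.le)
    have hderiv := hasDerivAt_runningMean c.continuous_g one_ne_zero
    rw [hzero 1 one_pos, sub_zero, div_one] at hderiv
    have hflat : HasDerivAt (runningMean g) 0 1 :=
      (hasDerivAt_const (1 : ℝ) (0 : ℝ)).congr_of_eventuallyEq <|
        (lt_mem_nhds one_pos).mono hzero
    have hg : g 1 = 0 := hderiv.unique hflat
    have hu := c.u_eq 1 one_pos
    rw [hg, hzero 1 one_pos, mul_zero, mul_zero, add_zero] at hu
    exact (c.u_pos 1).ne' hu
  exact ⟨_, mul_pos hx hpos, (eventually_ge_atTop x).mono fun z hz => c.mul_mean_mono hx hz⟩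

lemma eventually_mean_pos (c : TailEquation σ H θ p S u h g) :
    ∀ᶠ x in atTop, 0 < runningMean g x := by
  obtain ⟨b, hb, hev⟩ := c.exists_pos_le_mul_mean
  filter_upwards [hev, eventually_gt_atTop 0] with x hx hx0
  exact pos_of_mul_pos_right (hb.trans_le hx) hx0.le

end TailEquation

/-- The length scale `x ^ (1 / 10)` of the local analysis at `x`: the Gaussian mass beyond it is
smaller than any power of `1 / x`, while `⌊scale x⌋₊` steps of that length stay well inside
`[x / 2, 2 * x]`. -/
noncomputable def scale (x : ℝ) : ℝ := x ^ (1 / 10 : ℝ)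

lemma tendsto_scale : Tendsto scale atTop atTop := tendsto_rpow_atTop (by norm_num)

lemma scale_pos {x : ℝ} (hx : 0 < x) : 0 < scale x := Real.rpow_pos_of_pos hx _

lemma scale_pow {x : ℝ} (hx : 0 ≤ x) : scale x ^ 10 = x := by
  rw [scale, ← Real.rpow_natCast, ← Real.rpow_mul hx]
  norm_num

lemma log_scale {x : ℝ} (hx : 0 < x) : Real.log (scale x) = Real.log x / 10 := by
  rw [scale, Real.log_rpow hx]
  ring

lemma inv_scale_sq {x : ℝ} (hx : 0 < x) : (scale x ^ 2)⁻¹ = x ^ (-(1 / 5) : ℝ) := by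
  rw [scale, ← Real.rpow_natCast, ← Real.rpow_mul hx.le, ← Real.rpow_neg hx.le]
  norm_num

lemma scale_le_two_mul {x z : ℝ} (hz : 0 ≤ z) (hzx : z ≤ 2 * x) : scale z ≤ 2 * scale x := by
  have hx : 0 ≤ x := by linarith
  have hs : 0 ≤ scale x := Real.rpow_nonneg hx _
  refine le_of_pow_le_pow_left₀ (n := 10) (by norm_num) (by positivity) ?_
  rw [mul_pow, scale_pow hz, scale_pow hx]
  nlinarith

lemma eventually_scale_sq_le : ∀ᶠ x in atTop, 40 * scale x ^ 2 ≤ x := by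
  filter_upwards [tendsto_scale.eventually_ge_atTop 10, eventually_ge_atTop 0] with x hs hx
  calc 40 * scale x ^ 2 ≤ 10 ^ 8 * scale x ^ 2 := by gcongr; norm_num
    _ ≤ scale x ^ 8 * scale x ^ 2 := by gcongr
    _ = x := by rw [← pow_add, scale_pow hx]

lemma eventually_gaussTail_scale_le {σ : ℝ} (hσ : 0 < σ) (k : ℕ) :
    ∀ᶠ x in atTop, gaussTail σ (scale x) ≤ 1 / x ^ k := by
  have hexp := (Real.tendsto_pow_mul_exp_neg_atTop_nhds_zero (10 * k)).comp tendsto_scale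
  filter_upwards [hexp.eventually (gt_mem_nhds one_half_pos),
    tendsto_scale.eventually_ge_atTop (4 * σ ^ 2), eventually_gt_atTop 0] with x hx hs hx0
  simp only [Function.comp, pow_mul, scale_pow hx0.le] at hx
  have hs0 := scale_pos hx0
  have hgauss : -scale x ^ 2 / (4 * σ ^ 2) ≤ -scale x := by
    rw [neg_div, neg_le_neg_iff, le_div_iff₀ (by positivity)]
    nlinarith [mul_le_mul_of_nonneg_left hs hs0.le]
  have htwo : √2 ≤ 2 := Real.sqrt_le_self_iff.2 (Or.inr one_le_two)
  rw [le_div_iff₀ (by positivity)]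
  calc gaussTail σ (scale x) * x ^ k ≤ 2 * Real.exp (-scale x) * x ^ k := by
        unfold gaussTail; gcongr
    _ ≤ 1 := by linarith

lemma eventually_pow_floor_scale_le :
    ∀ᶠ x in atTop, (3 / 4 : ℝ) ^ ⌊scale x⌋₊ ≤ 1 / x ^ 2 := by
  have hpow := (tendsto_pow_const_mul_const_pow_of_abs_lt_one 20 (r := 3 / 4)
    (by rw [abs_of_pos] <;> norm_num)).comp (tendsto_nat_floor_atTop.comp tendsto_scale)
  filter_upwards [hpow.eventually (gt_mem_nhds (by positivity : (0 : ℝ) < 1 / 2 ^ 20)),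
    tendsto_scale.eventually_ge_atTop 1, eventually_gt_atTop 0] with x hK hs hx
  simp only [Function.comp] at hK
  have hfloor : scale x ≤ 2 * ⌊scale x⌋₊ := by
    have : (1 : ℝ) ≤ ⌊scale x⌋₊ := by exact_mod_cast (Nat.one_le_floor_iff _).2 hs
    linarith [Nat.lt_floor_add_one (scale x)]
  have hx2 : x ^ 2 ≤ 2 ^ 20 * (⌊scale x⌋₊ : ℝ) ^ 20 := by
    rw [← mul_pow]
    calc x ^ 2 = scale x ^ 20 := by conv_lhs => rw [← scale_pow hx.le, ← pow_mul]
      _ ≤ _ := by gcongr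
  rw [lt_div_iff₀ (by positivity)] at hK
  rw [le_div_iff₀ (by positivity)]
  calc (3 / 4 : ℝ) ^ ⌊scale x⌋₊ * x ^ 2
      ≤ (3 / 4 : ℝ) ^ ⌊scale x⌋₊ * (2 ^ 20 * (⌊scale x⌋₊ : ℝ) ^ 20) := by gcongr
    _ ≤ 1 := by linarith

lemma iterate_contraction {P : ℝ → ℝ → Prop} {w E δ : ℝ} (K : ℕ) (hw : 0 ≤ w) (hE : 0 ≤ E)
    (hδ : 0 ≤ δ) (h0 : P (K * w) E)
    (hstep : ∀ R Λ, 0 ≤ R → R + w ≤ K * w → 0 ≤ Λ → P (R + w) Λ → P R (3 / 4 * Λ + δ)) :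
    ∃ Λ ≤ (3 / 4) ^ K * E + 4 * δ, P 0 Λ := by
  suffices h : ∀ j ≤ K, ∃ Λ, 0 ≤ Λ ∧ Λ ≤ (3 / 4) ^ j * E + 4 * δ ∧ P ((K - j : ℝ) * w) Λ by
    obtain ⟨Λ, -, hΛ, hP⟩ := h K le_rfl
    rw [sub_self, zero_mul] at hP
    exact ⟨Λ, hΛ, hP⟩
  intro j hj
  induction j with
  | zero => exact ⟨E, hE, by linarith, by simpa using h0⟩
  | succ j ih =>
    obtain ⟨Λ, hΛ0, hΛ, hP⟩ := ih (by lia)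
    have hjK : (j : ℝ) + 1 ≤ K := by exact_mod_cast hj
    have hR : ((K : ℝ) - (j + 1 : ℕ)) * w + w = (K - j) * w := by push_cast; ring
    refine ⟨3 / 4 * Λ + δ, by positivity, by rw [pow_succ]; linarith, hstep _ Λ ?_ ?_ hΛ0 ?_⟩
    · push_cast
      exact mul_nonneg (by linarith) hw
    · rw [hR]
      gcongr
      linarith [(Nat.cast_nonneg j : (0 : ℝ) ≤ j)]
    · rwa [hR]

lemma eventually_contraction : ∀ᶠ x in atTop, ∀ (P : ℝ → ℝ → Prop) (E δ : ℝ), 0 ≤ E → 0 ≤ δ →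
    (∀ R ≤ 2 * scale x ^ 2, P R E) →
    (∀ R Λ, 0 ≤ R → R + 2 * scale x ≤ 2 * scale x ^ 2 → 0 ≤ Λ →
      P (R + 2 * scale x) Λ → P R (3 / 4 * Λ + δ)) →
    ∃ Λ ≤ E / x ^ 2 + 4 * δ, P 0 Λ := by
  filter_upwards [eventually_pow_floor_scale_le, eventually_gt_atTop 0]
    with x hpow hx P E δ hE hδ h0 hstep
  have hs := (scale_pos hx).le
  have hK : ⌊scale x⌋₊ * (2 * scale x) ≤ 2 * scale x ^ 2 := by
    nlinarith [Nat.floor_le hs]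
  obtain ⟨Λ, hΛ, hP⟩ := iterate_contraction ⌊scale x⌋₊ (by positivity) hE hδ (h0 _ hK)
    fun R Λ hR hRK => hstep R Λ hR (hRK.trans hK)
  refine ⟨Λ, hΛ.trans (add_le_add_left ?_ _), hP⟩
  exact (mul_le_mul_of_nonneg_right hpow hE).trans_eq (one_div_mul_eq_div _ _)

lemma eventually_forall_ge_half {P : ℝ → Prop} (hP : ∀ᶠ x in atTop, P x) :
    ∀ᶠ x in atTop, ∀ z, x / 2 ≤ z → P z :=
  (tendsto_id.atTop_div_const two_pos).eventually (eventually_forall_ge_atTop.2 hP)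

namespace TailEquation
variable {σ H θ : ℝ} {p S u h g : ℝ → ℝ}

lemma eventually_S_sub_le_g (c : TailEquation σ H θ p S u h g) :
    ∀ᶠ x in atTop, ∀ z ∈ Icc (x / 2) (2 * x), ∀ v, 0 < v →
      (∀ y ∈ Icc (z - 2 * scale x) (z + 2 * scale x), v ≤ u y) → S v - v / x ^ 2 ≤ g z := by
  filter_upwards [eventually_gaussTail_scale_le c.σ_pos 3, eventually_scale_sq_le,
    tendsto_scale.eventually_ge_atTop 1, eventually_ge_atTop 3] with x hτ hs hs1 hx z hz v hv huv
  have hτx : 3 * gaussTail σ (scale x) ≤ 1 / x ^ 2 := by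
    rw [le_div_iff₀ (by positivity)] at hτ ⊢
    nlinarith [mul_pos (gaussTail_pos σ (scale x)) (by positivity : 0 < x ^ 2)]
  have hx2 : 1 / x ^ 2 ≤ 1 := (div_le_one (by positivity)).2 (by nlinarith)
  refine le_trans ?_ (c.g_lower (by linarith) (by nlinarith [hz.1]) (by linarith) hv huv)
  have hSv := c.S_nonneg v hv
  calc S v - v / x ^ 2 = S v - 1 / x ^ 2 * v := by ring
    _ ≤ S v - 3 * gaussTail σ (scale x) * S v := by
      gcongr
      exact (c.S_lt hv).le

lemma eventually_le_g_of_le_mean (c : TailEquation σ H θ p S u h g) {v₀ : ℝ}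
    (hLip : ∀ v w, 0 < v → v ≤ w → w ≤ v₀ → S w - S v ≤ 3 / 2 * (w - v)) :
    ∀ᶠ x in atTop, ∀ α, 0 < α → α ≤ v₀ →
      (∀ z ∈ Icc (x - 2 * scale x ^ 2) (x + 2 * scale x ^ 2), α ≤ runningMean g z) →
      α - 4 * (α - S α) - 5 * α / x ^ 2 ≤ g x := by
  filter_upwards [c.eventually_S_sub_le_g, eventually_contraction, eventually_scale_sq_le,
    eventually_gt_atTop 0] with x hlow hiter hs hx α hα hαv hA
  have hs0 := scale_pos hx
  have hr := c.S_lt hα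
  set P : ℝ → ℝ → Prop := fun R Λ => ∀ z ∈ Icc (x - R) (x + R), α - Λ ≤ g z
  have hstep : ∀ R Λ, 0 ≤ R → R + 2 * scale x ≤ 2 * scale x ^ 2 → 0 ≤ Λ →
      P (R + 2 * scale x) Λ → P R (3 / 4 * Λ + (α - S α + α / x ^ 2)) := by
    intro R Λ hR hRs hΛ hg z hz
    set Λ' := min Λ α
    have hΛ' : Λ' ≤ Λ := min_le_left _ _
    have hΛα : Λ' ≤ α := min_le_right _ _
    have hΛ0 : 0 ≤ Λ' := le_min hΛ hα.le
    have hθΛ : θ * Λ' ≤ 1 / 2 * Λ' := mul_le_mul_of_nonneg_right c.θ_le hΛ0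
    have hθΛ0 : 0 ≤ θ * Λ' := mul_nonneg c.θ_pos.le hΛ0
    have hv : 0 < α - θ * Λ' := by linarith
    have hgz := hlow z ⟨by linarith [hz.1], by linarith [hz.2]⟩ _ hv fun y hy => by
      have hyx : y ∈ Icc (x - (R + 2 * scale x)) (x + (R + 2 * scale x)) :=
        ⟨by linarith [hy.1, hz.1], by linarith [hy.2, hz.2]⟩
      have hgy : α - Λ' ≤ g y := by
        rw [sub_le_comm]
        exact le_min (by linarith [hg y hyx]) (by linarith [(c.g_mem y).1])
      have hAy := hA y ⟨by linarith [hyx.1], by linarith [hyx.2]⟩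
      rw [c.u_eq y (by linarith [hyx.1])]
      nlinarith [mul_le_mul_of_nonneg_left hgy c.θ_pos.le,
        mul_le_mul_of_nonneg_left hAy (by linarith [c.θ_le] : 0 ≤ 1 - θ)]
    have hSv := hLip (α - θ * Λ') α hv (by linarith) hαv
    have hx2 : (α - θ * Λ') / x ^ 2 ≤ α / x ^ 2 := by gcongr; linarith
    linarith
  obtain ⟨Λ, hΛ, hg⟩ := hiter P α _ hα.le (add_nonneg (by linarith) (by positivity))
    (fun R _ z _ => by linarith [(c.g_mem z).1]) hstep
  have hgx := hg x (by simp)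
  rw [mul_div_assoc]
  linarith

lemma eventually_sub_le_g (c : TailEquation σ H θ p S u h g) {v₀ : ℝ}
    (hLip : ∀ v w, 0 < v → v ≤ w → w ≤ v₀ → S w - S v ≤ 3 / 2 * (w - v)) :
    ∀ᶠ x in atTop, ∀ v, 0 < v → v ≤ v₀ → (∀ z ∈ Icc (x / 2) x, v ≤ runningMean g z) →
      v - 4 * (v - S v) - v / scale x ^ 2 ≤ g x := by
  filter_upwards [c.eventually_le_g_of_le_mean hLip, eventually_scale_sq_le,
    tendsto_scale.eventually_ge_atTop 10, eventually_ge_atTop 1]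
    with x hlow hs hs10 hx v hv hvv hA
  set η := 2 * scale x ^ 2 / x
  have hηx : η * x = 2 * scale x ^ 2 := div_mul_cancel₀ _ (by linarith)
  have hη0 : 0 < η := by positivity
  have hη1 : η ≤ 1 / 20 := by rw [div_le_iff₀ (by linarith)]; linarith
  have hα : 0 < v * (1 - η) := mul_pos hv (by linarith)
  have hαv : v * (1 - η) ≤ v := by nlinarith
  have hg := hlow (v * (1 - η)) hα (hαv.trans hvv) fun z hz => by
    rcases le_total z x with hzx | hxz
    · exact hαv.trans (hA z ⟨by linarith [hz.1], hzx⟩)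
    · have hAx := hA x ⟨by linarith, le_rfl⟩
      have hAz := c.mul_mean_mono (by linarith) hxz
      refine le_of_mul_le_mul_left ?_ (by linarith : 0 < z)
      calc z * (v * (1 - η)) ≤ x * v := by nlinarith [hz.2, mul_nonneg hη0.le (sub_nonneg.2 hxz)]
        _ ≤ x * runningMean g x := by gcongr
        _ ≤ z * runningMean g z := hAz
  have hSα := hLip _ v hα hαv hvv
  have hsmall : 3 * η + 5 / x ^ 2 ≤ 1 / scale x ^ 2 := by
    have hx2 : 5 / x ^ 2 ≤ η := by
      rw [div_le_iff₀ (by positivity)]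
      nlinarith
    have hη : 4 * η ≤ 1 / scale x ^ 2 := by
      rw [le_div_iff₀ (by positivity), ← mul_le_mul_iff_of_pos_right (by linarith : 0 < x)]
      calc 4 * η * scale x ^ 2 * x = 8 * scale x ^ 4 := by linear_combination 4 * scale x ^ 2 * hηx
        _ ≤ scale x ^ 6 * scale x ^ 4 := by
          gcongr
          exact le_trans (by norm_num) (pow_le_pow_left₀ (by norm_num) hs10 6)
        _ = 1 * x := by rw [← pow_add, scale_pow (by linarith), one_mul]
    linarith
  have hv2 : 5 * (v * (1 - η)) / x ^ 2 ≤ v * (5 / x ^ 2) := by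
    calc 5 * (v * (1 - η)) / x ^ 2 ≤ 5 * v / x ^ 2 := by gcongr
      _ = v * (5 / x ^ 2) := by ring
  have := mul_le_mul_of_nonneg_left hsmall hv.le
  rw [mul_one_div] at this
  linarith

end TailEquation

/-! ### The polynomial lower bound -/

lemma lt_of_forall_record_deriv_pos {A ψ β f' : ℝ → ℝ} {X : ℝ} (hX : 0 < X)
    (hA : ∀ x, X / 2 ≤ x → 0 < A x) (hψ : MonotoneOn ψ (Ioi 0)) (hβ : StrictAntiOn β (Ioi 0))
    (hf : ∀ x, X ≤ x → HasDerivAt (fun x => ψ (A x) - β x) (f' x) x)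
    (h0 : ∀ x ∈ Icc (X / 2) X, β x < ψ (A x))
    (hrec : ∀ x, X ≤ x → ψ (A x) = β x → (∀ y ∈ Icc (x / 2) x, A x ≤ A y) → 0 < f' x)
    {x : ℝ} (hx : X ≤ x) : β x < ψ (A x) := by
  refine sub_pos.1 (pos_of_deriv_pos_at_first_zero hf
    (sub_pos.2 (h0 X ⟨half_le_self hX.le, le_rfl⟩)) (fun x hXx hzero hbefore => ?_) x hx)
  refine hrec x hXx.le (sub_eq_zero.1 hzero) fun y hy => ?_
  rcases hy.2.eq_or_lt with rfl | hyx
  · exact le_rfl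
  have hy0 : X / 2 ≤ y := by linarith [hy.1]
  have hβy : β y < ψ (A y) := by
    rcases le_or_gt X y with hXy | hyX
    · exact sub_pos.1 (hbefore y ⟨hXy, hyx⟩)
    · exact h0 y ⟨hy0, hyX.le⟩
  have hβx : β x < β y := hβ (half_pos hX |>.trans_le hy0) (hX.trans hXx) hyx
  exact (hψ.reflect_lt (hA x (by linarith)) (hA y hy0)
    ((sub_eq_zero.1 hzero).trans_lt (hβx.trans hβy))).le

lemma exists_min_runningMean {g : ℝ → ℝ} (hg : Continuous g) {x : ℝ} (hx : 0 < x) :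
    ∃ y ∈ Icc (x / 2) x, ∀ z ∈ Icc (x / 2) x, runningMean g y ≤ runningMean g z :=
  isCompact_Icc.exists_isMinOn (nonempty_Icc.2 (half_le_self hx.le)) fun z hz =>
    (hasDerivAt_runningMean hg (by linarith [hz.1] : 0 < z).ne').continuousAt.continuousWithinAt

lemma exists_le_log_runningMean_of_record {g : ℝ → ℝ} (hg : Continuous g) {c s : ℝ} (hc : 0 ≤ c)
    (hs : 0 < s) (hpos : ∀ᶠ x in atTop, 0 < runningMean g x)
    (hrec : ∀ᶠ x in atTop, (∀ y ∈ Icc (x / 2) x, runningMean g x ≤ runningMean g y) →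
      -(c * x ^ (-s)) ≤ (g x - runningMean g x) / runningMean g x) :
    ∃ B, ∀ᶠ x in atTop, B ≤ Real.log (runningMean g x) := by
  obtain ⟨X, hX, hX2⟩ := ((eventually_forall_ge_half (hpos.and hrec)).and
    (eventually_ge_atTop 2)).exists
  have hX0 : 0 < X := two_pos.trans_le hX2
  obtain ⟨y, hy, hmin⟩ := exists_min_runningMean hg hX0
  set C := (c + 1) / s
  have hC : 0 < C := by positivity
  set b := Real.log (runningMean g y) - 1 - C
  have hβ : StrictAntiOn (fun x => b + C * x ^ (-s)) (Ioi 0) := fun x hx z _ hxz => by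
    have := mul_lt_mul_of_pos_left (Real.rpow_lt_rpow_of_neg hx hxz (neg_lt_zero.2 hs)) hC
    simp only
    linarith
  refine ⟨b, (eventually_ge_atTop X).mono fun x hx => ?_⟩
  suffices b + C * x ^ (-s) < Real.log (runningMean g x) by
    linarith [mul_nonneg hC.le (Real.rpow_nonneg (hX0.le.trans hx) (-s))]
  refine lt_of_forall_record_deriv_pos (ψ := Real.log) hX0 (fun x hx => (hX x hx).1)
    Real.strictMonoOn_log.monotoneOn hβ (fun x hx =>
      ((hasDerivAt_runningMean hg (hX0.trans_le hx).ne').log (hX x (by linarith)).1.ne').sub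
        (((Real.hasDerivAt_rpow_const (Or.inl (hX0.trans_le hx).ne')).const_mul C).const_add b))
    (fun x hx => ?_) (fun x hx _ hxrec => ?_) hx
  · have hxm := Real.log_le_log (hX y hy.1).1 (hmin x hx)
    have hx1 := Real.rpow_le_one_of_one_le_of_nonpos (by linarith [hx.1] : 1 ≤ x)
      (neg_nonpos.2 hs.le)
    linarith [mul_le_of_le_one_right hC.le hx1]
  · have hx0 : 0 < x := hX0.trans_le hx
    have hdrop := (hX x (by linarith)).2 hxrec
    have hβ' : C * (-s * x ^ (-s - 1)) = -((c + 1) * x ^ (-s)) / x := by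
      rw [Real.rpow_sub_one hx0.ne']
      simp only [C]
      field_simp
    rw [hβ', div_right_comm, ← sub_div]
    exact div_pos (by linarith [Real.rpow_pos_of_pos hx0 (-s)]) hx0

lemma one_div_pow_le_of_neg_mul_log_le {x y : ℝ} (hx : 0 < x) (hy : 0 < y) {k : ℕ}
    (h : -(k * Real.log x) ≤ Real.log y) : 1 / x ^ k ≤ y := by
  rw [← Real.log_le_log_iff (by positivity) hy, one_div, Real.log_inv, Real.log_pow]
  exact h

lemma TailProfile.log_p_mono {p S : ℝ → ℝ} (hT : TailProfile p S) :
    MonotoneOn (fun v => Real.log (p v)) (Ioi 0) := fun v hv _ hw hvw =>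
  Real.log_le_log (hT.p_pos v hv) (hT.p_mono hv hw hvw)

namespace SmoothTailProfile
variable {p S S' : ℝ → ℝ} {L : ℝ}

lemma eventually_log_gap_sub_le (hR : SmoothTailProfile p S S' 1) :
    ∀ᶠ w in nhdsWithin 0 (Ioi 0), ∀ v ∈ Ioc 0 w,
      Real.log (w - S w) - 1 / 60 * Real.log (p w) ≤
        Real.log (v - S v) - 1 / 60 * Real.log (p v) := by
  obtain ⟨v₀, hv₀, hv⟩ := exists_forall_Ioc_of_eventually_nhdsGT (hR.hasDerivAt_S.and
    (hR.hasDerivAt_log_p.and (hR.eventually_S'_mem (by norm_num : (0 : ℝ) < 1 / 100))))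
  filter_upwards [Ioc_mem_nhdsGT hv₀] with w hw v hvw
  have hmem : ∀ t ∈ Icc v w, t ∈ Ioc 0 v₀ := fun t ht => ⟨hvw.1.trans_le ht.1, ht.2.trans hw.2⟩
  have hgap : ∀ t ∈ Icc v w, 0 < t - S t := fun t ht => sub_pos.2 (hR.S_lt (hmem t ht).1)
  have hdiff := sub_le_mul_sub_of_hasDerivAt_le (C := 0) hvw.2
    (fun t ht => ((((hasDerivAt_id t).sub (hv t (hmem t ht)).1).log (hgap t ht).ne').sub
      ((hv t (hmem t ht)).2.1.const_mul (1 / 60)))) fun t ht => by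
    rw [← mul_div_assoc]
    refine (sub_div _ _ _).symm.trans_le (div_nonpos_of_nonpos_of_nonneg ?_ (hgap t ht).le)
    linarith [(hv t (hmem t ht)).2.2.1]
  simp only [Pi.sub_apply, id] at hdiff
  linarith

lemma eventually_div_scale_sq_le_gap (hR : SmoothTailProfile p S S' 1) :
    ∀ᶠ a in nhdsWithin 0 (Ioi 0), ∀ x₁ x v, 0 < x₁ → 0 < x → v ∈ Ioc 0 a →
      a / scale x₁ ^ 2 ≤ a - S a →
      Real.log (p a) + 12 * Real.log x₁ - 11 - 12 * Real.log x ≤ Real.log (p v) →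
      v / scale x ^ 2 ≤ 3 * (v - S v) := by
  filter_upwards [hR.eventually_log_gap_sub_le] with a hanti x₁ x v hx₁ hx hv hstart hpv
  have hs₁ := scale_pos hx₁
  have hs := scale_pos hx
  have hlog : ∀ {w y : ℝ}, 0 < w → 0 < y →
      Real.log (w / scale y ^ 2) = Real.log w - Real.log y / 5 := fun hw hy => by
    rw [Real.log_div hw.ne' (pow_ne_zero 2 (scale_pos hy).ne'), Real.log_pow, log_scale hy]
    push_cast
    ring
  have ha : 0 < a := hv.1.trans_le hv.2
  have hgap_v : 0 < v - S v := sub_pos.2 (hR.S_lt hv.1)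
  have hlog_start := Real.log_le_log (by positivity) hstart
  have hlog_va := Real.log_le_log hv.1 hv.2
  have hlog_three : 11 / 60 ≤ Real.log 3 := by
    linarith [Real.log_two_gt_d9, Real.log_le_log two_pos (by norm_num : (2 : ℝ) ≤ 3)]
  have hv_scale : 0 < v / scale x ^ 2 := div_pos hv.1 (pow_pos hs 2)
  rw [← Real.log_le_log_iff hv_scale (by positivity), hlog hv.1 hx,
    Real.log_mul (by norm_num) hgap_v.ne']
  rw [hlog ha hx₁] at hlog_start
  linarith [hanti v hv]

lemma eventually_log_p_sub_le (hR : SmoothTailProfile p S S' 1) :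
    ∀ᶠ v in nhdsWithin 0 (Ioi 0), 0 < v - 7 * (v - S v) ∧
      Real.log (p v) - Real.log (p (v - 7 * (v - S v))) ≤ 28 := by
  have hsmall : ∀ᶠ v in nhdsWithin 0 (Ioi 0), 99 / 100 ≤ S v / v :=
    (hR.tendsto_S_div.eventually (lt_mem_nhds (by norm_num))).mono fun _ hv => hv.le
  obtain ⟨v₀, hv₀, hv⟩ := exists_forall_Ioc_of_eventually_nhdsGT
    (hR.hasDerivAt_log_p.and (hR.eventually_S'_mem (by norm_num : (0 : ℝ) < 1 / 100)))
  obtain ⟨v₁, hv₁, hLip⟩ := hR.exists_S_sub_mem (by norm_num : (0 : ℝ) < 1 / 100)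
  filter_upwards [hsmall, Ioc_mem_nhdsGT hv₀, Ioc_mem_nhdsGT hv₁] with v hSv hvv₀ hvv₁
  rw [le_div_iff₀ hvv₀.1] at hSv
  obtain ⟨r, hr⟩ : ∃ r, r = v - S v := ⟨_, rfl⟩
  have hr0 : 0 < r := hr ▸ sub_pos.2 (hR.S_lt hvv₀.1)
  rw [← hr]
  have hpos : 0 < v - 7 * r := by linarith [hvv₀.1]
  refine ⟨hpos, ?_⟩
  have hdiff := sub_le_mul_sub_of_hasDerivAt_le (C := 4 / r) (by linarith : v - 7 * r ≤ v)
    (fun t ht => (hv t ⟨hpos.trans_le ht.1, ht.2.trans hvv₀.2⟩).1) fun t ht => by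
    have ht0 : 0 < t := hpos.trans_le ht.1
    have hS := (hLip t v ht0 ht.2 hvv₁.2).1
    have hgap : r / 2 ≤ t - S t := by linarith [ht.1]
    have hS' := (hv t ⟨ht0, ht.2.trans hvv₀.2⟩).2.2
    rw [div_le_div_iff₀ (by linarith) hr0]
    nlinarith
  calc Real.log (p v) - Real.log (p (v - 7 * r)) ≤ 4 / r * (v - (v - 7 * r)) := hdiff
    _ = 28 := by field_simp; ring

lemma exists_le_log_p (hR : SmoothTailProfile p S S' L) (hL : L < 1) :
    ∃ K C : ℝ, 0 ≤ K ∧ ∀ᶠ v in nhdsWithin 0 (Ioi 0), C + K * Real.log v ≤ Real.log (p v) := by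
  obtain ⟨q, hLq, hq⟩ := exists_between hL
  have hq0 : 0 ≤ q := hR.L_nonneg.trans hLq.le
  have hK : 0 ≤ q / (1 - q) := div_nonneg hq0 (by linarith)
  obtain ⟨v₀, hv₀, hv⟩ := exists_forall_Ioc_of_eventually_nhdsGT (hR.hasDerivAt_log_p.and
    ((hR.tendsto_S'.eventually (gt_mem_nhds hLq)).and
      (hR.tendsto_S_div.eventually (gt_mem_nhds hLq))))
  refine ⟨q / (1 - q), Real.log (p v₀) - q / (1 - q) * Real.log v₀, hK, ?_⟩
  filter_upwards [Ioc_mem_nhdsGT hv₀] with v hvv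
  have hdiff := sub_le_mul_sub_of_hasDerivAt_le (C := 0) hvv.2
    (fun t ht => (hv t ⟨hvv.1.trans_le ht.1, ht.2⟩).1.sub
      ((Real.hasDerivAt_log (hvv.1.trans_le ht.1).ne').const_mul (q / (1 - q)))) fun t ht => by
    have ht0 : 0 < t := hvv.1.trans_le ht.1
    obtain ⟨-, hS', hS⟩ := hv t ⟨ht0, ht.2⟩
    rw [div_lt_iff₀ ht0] at hS
    have hgap : (1 - q) * t ≤ t - S t := by linarith
    rw [sub_nonpos]
    calc S' t / (t - S t) ≤ q / ((1 - q) * t) := by gcongr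
      _ = q / (1 - q) * t⁻¹ := by rw [← div_div, div_eq_mul_inv (q / (1 - q))]
  simp only [Pi.sub_apply] at hdiff
  linarith

end SmoothTailProfile

namespace TailEquation
variable {σ H θ L : ℝ} {p S S' u h g : ℝ → ℝ}

lemma tendsto_mean_nhdsGT (c : TailEquation σ H θ p S u h g) :
    Tendsto (runningMean g) atTop (nhdsWithin 0 (Ioi 0)) :=
  tendsto_nhdsWithin_iff.2 ⟨c.tendsto_mean, c.eventually_mean_pos⟩

lemma frequently_record (c : TailEquation σ H θ p S u h g) {v₀ : ℝ} (hv₀ : 0 < v₀)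
    (hLip : ∀ v w, 0 < v → v ≤ w → w ≤ v₀ → S w - S v ≤ 3 / 2 * (w - v)) :
    ∃ᶠ x in atTop, (∀ y ∈ Icc (x / 2) x, runningMean g x ≤ runningMean g y) ∧
      runningMean g x / scale x ^ 2 ≤ runningMean g x - S (runningMean g x) := by
  intro hno
  obtain ⟨B, hB⟩ := exists_le_log_runningMean_of_record c.continuous_g (c := 5) (s := 1 / 5)
    (by norm_num) (by norm_num) c.eventually_mean_pos <| by
    filter_upwards [hno, c.eventually_sub_le_g hLip, c.eventually_mean_pos,
      c.tendsto_mean.eventually (gt_mem_nhds hv₀), eventually_gt_atTop 0]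
      with x hnox hlow hA hAv hx hrec
    have hgap := lt_of_not_ge fun hge => hnox ⟨hrec, hge⟩
    have hg := hlow _ hA hAv.le hrec
    rw [div_eq_mul_inv, inv_scale_sq hx] at hgap hg
    rw [le_div_iff₀ hA]
    linarith
  have hlog : Tendsto (fun x => Real.log (runningMean g x)) atTop atBot :=
    Real.tendsto_log_nhdsGT_zero.comp c.tendsto_mean_nhdsGT
  obtain ⟨x, hx, hBx⟩ := ((hlog.eventually_lt_atBot B).and hB).exists
  exact hBx.not_gt hx

lemma eventually_hasDerivAt_log_p_mean (c : TailEquation σ H θ p S u h g)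
    (hR : SmoothTailProfile p S S' L) :
    ∀ᶠ x in atTop, HasDerivAt (fun x => Real.log (p (runningMean g x)))
      (S' (runningMean g x) / (runningMean g x - S (runningMean g x)) *
        ((g x - runningMean g x) / x)) x := by
  filter_upwards [c.tendsto_mean_nhdsGT.eventually hR.hasDerivAt_log_p, eventually_ne_atTop 0]
    with x hx hx0
  exact hx.comp x (hasDerivAt_runningMean c.continuous_g hx0)

lemma eventually_neg_twelve_lt_of_record (c : TailEquation σ H θ p S u h g)
    (hR : SmoothTailProfile p S S' 1) :
    ∀ᶠ x in atTop, (∀ y ∈ Icc (x / 2) x, runningMean g x ≤ runningMean g y) →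
      runningMean g x / scale x ^ 2 ≤ 3 * (runningMean g x - S (runningMean g x)) →
      -12 < S' (runningMean g x) / (runningMean g x - S (runningMean g x)) *
        (g x - runningMean g x) := by
  obtain ⟨v₀, hv₀, hLip⟩ := hR.exists_S_sub_le
  filter_upwards [c.eventually_sub_le_g hLip, c.tendsto_mean_nhdsGT.eventually
    ((hR.eventually_S'_mem (by norm_num : (0 : ℝ) < 1 / 100)).and (Ioc_mem_nhdsGT hv₀))]
    with x hlow ⟨hS', hA, hAv⟩ hrec hscale
  have hgap : 0 < runningMean g x - S (runningMean g x) := sub_pos.2 (hR.S_lt hA)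
  have hg := hlow _ hA hAv hrec
  rw [div_mul_eq_mul_div, lt_div_iff₀ hgap]
  have hdrop : -(7 * (runningMean g x - S (runningMean g x))) ≤ g x - runningMean g x := by
    linarith
  linarith [mul_le_mul_of_nonneg_left hdrop (by linarith [hS'.1] : 0 ≤ S' (runningMean g x)),
    mul_le_mul_of_nonneg_right hS'.2 hgap.le]

lemma exists_le_log_p_mean (c : TailEquation σ H θ p S u h g)
    (hR : SmoothTailProfile p S S' 1) :
    ∃ a > 0, ∃ B,
      (∀ᶠ x in atTop, ∀ v ∈ Ioc 0 a, B - 12 * Real.log x ≤ Real.log (p v) →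
        v / scale x ^ 2 ≤ 3 * (v - S v)) ∧
      ∀ᶠ x in atTop, B - 12 * Real.log x < Real.log (p (runningMean g x)) := by
  obtain ⟨v₀, hv₀, hLip⟩ := hR.exists_S_sub_le
  obtain ⟨x₁, ⟨hrec₁, hstart⟩, hX, hx₁⟩ := ((c.frequently_record hv₀ hLip).and_eventually
    ((eventually_forall_ge_half (((c.eventually_hasDerivAt_log_p_mean hR).and
      (c.eventually_neg_twelve_lt_of_record hR)).and (c.eventually_mean_pos.and
        (c.tendsto_mean_nhdsGT.eventually hR.eventually_div_scale_sq_le_gap)))).and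
          (eventually_gt_atTop 0))).exists
  have hmean_pos : ∀ x, x₁ / 2 ≤ x → 0 < runningMean g x := fun x hx => (hX x hx).2.1
  have hhalf : x₁ / 2 ≤ x₁ := half_le_self hx₁.le
  set a := runningMean g x₁
  obtain ⟨B, hB⟩ : ∃ B, B = Real.log (p a) + 12 * Real.log x₁ - 11 := ⟨_, rfl⟩
  have hgap : ∀ x > 0, ∀ v ∈ Ioc 0 a, B - 12 * Real.log x ≤ Real.log (p v) →
      v / scale x ^ 2 ≤ 3 * (v - S v) := fun x hx v hv hpv =>
    (hX x₁ hhalf).2.2 x₁ x v hx₁ hx hv hstart (hB ▸ hpv)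
  have hanti : StrictAntiOn (fun x => B - 12 * Real.log x) (Ioi 0) := fun x hx z _ hxz => by
    linarith [Real.log_lt_log hx hxz]
  refine ⟨a, hmean_pos x₁ hhalf, B, (eventually_gt_atTop 0).mono hgap,
    (eventually_ge_atTop x₁).mono fun x hx => ?_⟩
  refine lt_of_forall_record_deriv_pos (ψ := fun v => Real.log (p v)) hx₁ hmean_pos hR.log_p_mono
    hanti (fun x hx => (hX x (hhalf.trans hx)).1.1.sub
      (((Real.hasDerivAt_log (hx₁.trans_le hx).ne').const_mul 12).const_sub B))
    (fun x hx => ?_) (fun x hx hpx hrec => ?_) hx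
  · have hlog := Real.log_le_log (half_pos hx₁) hx.1
    rw [Real.log_div hx₁.ne' two_ne_zero] at hlog
    have hpa := hR.log_p_mono (hmean_pos x₁ hhalf) (hmean_pos x hx.1) (hrec₁ x hx)
    simp only at hpa
    linarith [Real.log_two_lt_d9]
  · have hx0 : 0 < x := hx₁.trans_le hx
    have hA := hmean_pos x (hhalf.trans hx)
    have hlog := Real.log_le_log hx₁ hx
    have hAa : runningMean g x ≤ a :=
      (hR.log_p_mono.reflect_lt hA (hmean_pos x₁ hhalf) (by linarith)).le
    have hstep := (hX x (hhalf.trans hx)).1.2 hrec (hgap x hx0 _ ⟨hA, hAa⟩ hpx.ge)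
    rw [← mul_div_assoc, ← div_eq_mul_inv (12 : ℝ), ← neg_div, ← sub_div]
    exact div_pos (by linarith) hx0

lemma exists_pow_le_p_of_L_eq_one (c : TailEquation σ H θ p S u h g)
    (hR : SmoothTailProfile p S S' 1) : ∃ k : ℕ, ∀ᶠ x in atTop, 1 / x ^ k ≤ p (u x) := by
  obtain ⟨v₀, hv₀, hLip⟩ := hR.exists_S_sub_le
  obtain ⟨a, ha, B, hgap, hmean⟩ := c.exists_le_log_p_mean hR
  refine ⟨13, ?_⟩
  filter_upwards [hgap, eventually_forall_ge_half (hmean.and (c.tendsto_mean_nhdsGT.eventually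
      (hR.eventually_log_p_sub_le.and ((eventually_mem_set.2 (Ioc_mem_nhdsGT hv₀)).and
        (Ioc_mem_nhdsGT ha))))),
    c.eventually_sub_le_g hLip, Real.tendsto_log_atTop.eventually_ge_atTop (28 - B),
    eventually_gt_atTop 0] with x hgapx hhalf hlow hlogx hx
  obtain ⟨y, hy, hmin⟩ := exists_min_runningMean c.continuous_g hx
  obtain ⟨hpv, ⟨hpos, hdrop⟩, ⟨hv, hvv₀⟩, -, hva⟩ := hhalf y hy.1
  set v := runningMean g y
  have hlogy := Real.log_le_log ((half_pos hx).trans_le hy.1) hy.2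
  have hscale := hgapx v ⟨hv, hva⟩ (by linarith)
  have hg := hlow v hv hvv₀ hmin
  have hAx := hmin x ⟨half_le_self hx.le, le_rfl⟩
  have hu : v - 7 * (v - S v) ≤ u x := by
    rw [c.u_eq x hx]
    nlinarith [c.θ_pos, c.θ_le, hR.S_lt hv]
  have hpu := hR.log_p_mono hpos (c.u_pos x) hu
  simp only at hpu
  refine one_div_pow_le_of_neg_mul_log_le hx (c.p_pos _ (c.u_pos x)) ?_
  push_cast
  linarith

lemma exists_pow_le_p_of_L_lt_one (c : TailEquation σ H θ p S u h g)
    (hR : SmoothTailProfile p S S' L) (hL : L < 1) :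
    ∃ k : ℕ, ∀ᶠ x in atTop, 1 / x ^ k ≤ p (u x) := by
  obtain ⟨K, C, hK, hlog⟩ := hR.exists_le_log_p hL
  obtain ⟨b, hb, hmean⟩ := c.exists_pos_le_mul_mean
  obtain ⟨k, hk⟩ := exists_nat_ge (K + 1)
  refine ⟨k, ?_⟩
  filter_upwards [hmean, c.tendsto_u_nhdsGT.eventually hlog, eventually_gt_atTop 0,
    Real.tendsto_log_atTop.eventually_ge_atTop 0,
    Real.tendsto_log_atTop.eventually_ge_atTop (-(C + K * Real.log (b / 2)))]
    with x hbx hpu hx hlogx0 hlogx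
  have hu : b / 2 / x ≤ u x := by
    rw [div_le_iff₀ hx]
    nlinarith [c.mean_le_two_mul_u hx]
  have hlogu := Real.log_le_log (by positivity) hu
  rw [Real.log_div (by positivity) hx.ne'] at hlogu
  refine one_div_pow_le_of_neg_mul_log_le hx (c.p_pos _ (c.u_pos x)) ?_
  nlinarith [mul_le_mul_of_nonneg_left hlogu hK, mul_le_mul_of_nonneg_right hk hlogx0]

lemma exists_pow_le_p (c : TailEquation σ H θ p S u h g) (hR : SmoothTailProfile p S S' L) :
    ∃ k : ℕ, ∀ᶠ x in atTop, 1 / x ^ k ≤ p (u x) := by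
  rcases hR.L_le_one.lt_or_eq with hL | rfl
  · exact c.exists_pow_le_p_of_L_lt_one hR hL
  · exact c.exists_pow_le_p_of_L_eq_one hR

end TailEquation

/-! ### The local comparison -/

lemma abs_runningMean_sub_le {g : ℝ → ℝ} (hg : Continuous g) (h0 : ∀ y, 0 ≤ g y) {x w z G : ℝ}
    (hx : 0 < x) (hw : w ≤ x / 2) (hG : ∀ y ∈ Icc (x - w) (x + w), g y ≤ G)
    (hz : z ∈ Icc (x - w) (x + w)) :
    |runningMean g z - runningMean g x| ≤ 2 * w / x * (G + runningMean g x) := by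
  have hz0 : x / 2 ≤ z := by linarith [hz.1]
  have hA := runningMean_nonneg h0 hx.le
  have hG0 : 0 ≤ G := (h0 z).trans (hG z hz)
  have hw0 : 0 ≤ w := by linarith [hz.1, hz.2]
  have hmass : |z * runningMean g z - x * runningMean g x| ≤ G * |z - x| := by
    rw [mul_runningMean (by linarith), mul_runningMean hx.ne']
    rcases le_total x z with hxz | hzx
    · have hmem := integral_sub_integral_mem_Icc hg h0 hxz fun y hy =>
        hG y ⟨by linarith [hy.1], hy.2.trans hz.2⟩
      rw [abs_of_nonneg hmem.1, abs_of_nonneg (sub_nonneg.2 hxz)]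
      exact hmem.2
    · have hmem := integral_sub_integral_mem_Icc hg h0 hzx fun y hy =>
        hG y ⟨hz.1.trans hy.1, by linarith [hy.2]⟩
      rw [abs_sub_comm, abs_of_nonneg hmem.1, abs_sub_comm, abs_of_nonneg (sub_nonneg.2 hzx)]
      exact hmem.2
  have hzx : |z - x| ≤ w := abs_sub_le_iff.2 ⟨by linarith [hz.2], by linarith [hz.1]⟩
  have hdecomp : z * (runningMean g z - runningMean g x) =
      (z * runningMean g z - x * runningMean g x) - (z - x) * runningMean g x := by ring
  have hbound : z * |runningMean g z - runningMean g x| ≤ w * (G + runningMean g x) := by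
    rw [← abs_of_nonneg (by linarith : 0 ≤ z), ← abs_mul, abs_of_nonneg (by linarith : 0 ≤ z),
      hdecomp]
    refine (abs_sub _ _).trans ?_
    rw [abs_mul, abs_of_nonneg hA]
    nlinarith [mul_le_mul_of_nonneg_left hzx hG0, mul_le_mul_of_nonneg_right hzx hA]
  rw [div_mul_eq_mul_div, le_div_iff₀ hx]
  nlinarith [abs_nonneg (runningMean g z - runningMean g x)]

/-- On the window of radius `R` around `x`, the nonnegative functions `f₁` and `f₂` take their
values in one common interval of length `Λ`; this is the induction hypothesis under which the two
sides of `g ≈ S ∘ u` are compared. -/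
def CommonBand (f₁ f₂ : ℝ → ℝ) (x R Λ : ℝ) : Prop :=
  ∃ b ≥ 0, ∀ z ∈ Icc (x - R) (x + R), f₁ z ∈ Icc b (b + Λ) ∧ f₂ z ∈ Icc b (b + Λ)

lemma CommonBand.abs_sub_le {f₁ f₂ : ℝ → ℝ} {x Λ : ℝ} (h : CommonBand f₁ f₂ x 0 Λ) :
    |f₁ x - f₂ x| ≤ Λ := by
  obtain ⟨b, -, hb⟩ := h
  obtain ⟨h₁, h₂⟩ := hb x (by simp)
  simpa using abs_sub_le_of_le_of_le h₁.1 h₁.2 h₂.1 h₂.2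

namespace TailEquation
variable {σ H θ L : ℝ} {p S S' u h g : ℝ → ℝ}

lemma exists_pow_le_gaussConv_p_u (c : TailEquation σ H θ p S u h g)
    (hR : SmoothTailProfile p S S' L) :
    ∃ k : ℕ, ∀ᶠ x in atTop, ∀ y ∈ Icc (x / 4) (4 * x),
      1 / x ^ k ≤ gaussConv σ (fun z => p (u z)) y := by
  obtain ⟨k, hk⟩ := c.exists_pow_le_p hR
  have hq := gq_pos c.σ_pos (0 + 1)
  refine ⟨k + 1, ?_⟩
  filter_upwards [eventually_forall_ge_half (eventually_forall_ge_half hk),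
    eventually_ge_atTop (5 ^ k / gq σ (0 + 1)), eventually_ge_atTop 1] with x hpu hx hx1 y hy
  refine le_trans ?_ (mul_gq_le_gaussConv c.σ_pos c.bddMeasurable_p_u (q := 1 / (5 * x) ^ k)
    (ρ := 1) (R := 0) (x := y) (fun z => (c.p_u_mem z).1) (by positivity) zero_le_one
    (fun z hz => ?_) (by simp))
  · rw [div_le_iff₀ hq] at hx
    rw [mul_one, div_mul_eq_mul_div, one_mul, div_le_div_iff₀ (by positivity) (by positivity),
      mul_pow, pow_succ]
    nlinarith [pow_pos (zero_lt_one.trans_le hx1) k]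
  · have hz4 : x / 2 / 2 ≤ z := by linarith [hy.1, hz.1]
    refine le_trans ?_ (hpu (x / 2) le_rfl z hz4)
    have hz0 : 0 < z := by linarith
    gcongr
    linarith [hy.2, hz.2]

lemma eventually_g_le_S_add (c : TailEquation σ H θ p S u h g)
    (hR : SmoothTailProfile p S S' L) :
    ∀ᶠ x in atTop, ∀ z ∈ Icc (x / 2) (2 * x), ∀ s, 0 ≤ s →
      (∀ y ∈ Icc (z - 2 * scale x) (z + 2 * scale x), S (u y) ≤ s) → g z ≤ s + 2 * H / x ^ 2 := by
  obtain ⟨k, hk⟩ := c.exists_pow_le_gaussConv_p_u hR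
  filter_upwards [hk, eventually_gaussTail_scale_le c.σ_pos (k + 2), eventually_scale_sq_le,
    tendsto_scale.eventually_ge_atTop 1, eventually_ge_atTop 1] with x hD hτ hs hs1 hx z hz s hs0 hS
  have hH := c.H_pos
  have hwin : scale x ≤ x / 4 := by nlinarith
  have hg := c.g_upper (y := z) (d := scale x) (d' := scale x) (D := 1 / x ^ k) (by linarith)
    (by linarith)
    (by linarith [hz.1]) (by positivity)
    (fun w hw => hD w ⟨by linarith [hw.1, hz.1], by linarith [hw.2, hz.2]⟩) hs0
    (fun w hw => hS w ⟨by linarith [hw.1], by linarith [hw.2]⟩)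
  have hnear : gaussTail σ (scale x) ≤ 1 / x ^ 2 :=
    hτ.trans (one_div_le_one_div_of_le (by positivity) (pow_le_pow_right₀ hx (by lia)))
  have hfar : gaussTail σ (scale x) / (1 / x ^ k) ≤ 1 / x ^ 2 := by
    rw [div_le_iff₀ (by positivity), one_div_mul_one_div, ← pow_add, add_comm 2]
    exact hτ
  calc g z ≤ s + H * (gaussTail σ (scale x) / (1 / x ^ k)) + H * gaussTail σ (scale x) := by
        rwa [← mul_div_assoc]
    _ ≤ s + H * (1 / x ^ 2) + H * (1 / x ^ 2) := by gcongr
    _ = s + 2 * H / x ^ 2 := by ring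

lemma exists_mean_le_on_window (c : TailEquation σ H θ p S u h g) :
    ∃ C > 0, ∀ᶠ x in atTop, ∀ z ∈ Icc (x - 2 * scale x ^ 2) (x + 2 * scale x ^ 2),
      runningMean g z ≤ C * scale x ^ 2 * runningMean g x := by
  obtain ⟨b, hb, hmean⟩ := c.exists_pos_le_mul_mean
  have hH := c.H_pos
  refine ⟨2 + 4 * H / b, by positivity, ?_⟩
  filter_upwards [hmean, eventually_scale_sq_le, tendsto_scale.eventually_ge_atTop 1,
    eventually_gt_atTop 0] with x hbx hs hs1 hx z hz
  have hA := c.mean_nonneg hx.le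
  have hosc := le_of_abs_le (abs_runningMean_sub_le c.continuous_g (fun y => (c.g_mem y).1) hx
    (by linarith) (fun y _ => (c.g_mem y).2) hz)
  have hHx : H ≤ H / b * (x * runningMean g x) := by
    rw [div_mul_eq_mul_div, le_div_iff₀ hb]
    gcongr
  have hratio : 2 * (2 * scale x ^ 2) / x ≤ 1 := (div_le_one hx).2 (by linarith)
  calc runningMean g z
      ≤ runningMean g x + 2 * (2 * scale x ^ 2) / x *
          (H / b * (x * runningMean g x) + runningMean g x) := by
        have : 2 * (2 * scale x ^ 2) / x * (H + runningMean g x) ≤ 2 * (2 * scale x ^ 2) / x *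
          (H / b * (x * runningMean g x) + runningMean g x) := by gcongr
        linarith
    _ = runningMean g x + 4 * H / b * scale x ^ 2 * runningMean g x +
          2 * (2 * scale x ^ 2) / x * runningMean g x := by field_simp; ring
    _ ≤ scale x ^ 2 * runningMean g x + 4 * H / b * scale x ^ 2 * runningMean g x +
          scale x ^ 2 * runningMean g x := by
        gcongr
        · exact le_mul_of_one_le_left hA (one_le_pow₀ hs1)
        · exact hratio.trans (one_le_pow₀ hs1)
    _ = (2 + 4 * H / b) * scale x ^ 2 * runningMean g x := by ring

lemma eventually_g_le_of_mean_le (c : TailEquation σ H θ p S u h g)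
    (hR : SmoothTailProfile p S S' L) :
    ∀ᶠ x in atTop, ∀ α, 0 ≤ α →
      (∀ z ∈ Icc (x - 2 * scale x ^ 2) (x + 2 * scale x ^ 2), runningMean g z ≤ α) →
      g x ≤ α + 9 * H / x ^ 2 := by
  filter_upwards [c.eventually_g_le_S_add hR, eventually_contraction, eventually_scale_sq_le,
    eventually_gt_atTop 0] with x hupp hiter hs hx α hα hA
  have hH := c.H_pos
  set P : ℝ → ℝ → Prop := fun R Λ => ∀ z ∈ Icc (x - R) (x + R), g z ≤ α + Λ
  have hstep : ∀ R Λ, 0 ≤ R → R + 2 * scale x ≤ 2 * scale x ^ 2 → 0 ≤ Λ →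
      P (R + 2 * scale x) Λ → P R (3 / 4 * Λ + 2 * H / x ^ 2) := by
    intro R Λ hR hRs hΛ hg z hz
    have hs0 := scale_pos hx
    refine (hupp z ⟨by linarith [hz.1], by linarith [hz.2]⟩ (α + 3 / 4 * Λ) (by positivity)
      fun y hy => ?_).trans_eq (by ring)
    have hyx : y ∈ Icc (x - (R + 2 * scale x)) (x + (R + 2 * scale x)) :=
      ⟨by linarith [hy.1, hz.1], by linarith [hy.2, hz.2]⟩
    have hAy := hA y ⟨by linarith [hyx.1], by linarith [hyx.2]⟩
    refine (c.S_lt (c.u_pos y)).le.trans ?_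
    rw [c.u_eq y (by linarith [hyx.1])]
    nlinarith [mul_le_mul_of_nonneg_left (hg y hyx) c.θ_pos.le,
      mul_le_mul_of_nonneg_left hAy (by linarith [c.θ_le] : 0 ≤ 1 - θ), c.θ_le]
  obtain ⟨Λ, hΛ, hg⟩ := hiter P H _ hH.le (by positivity)
    (fun R _ z _ => by linarith [(c.g_mem z).2]) hstep
  calc g x ≤ α + Λ := hg x (by simp)
    _ ≤ α + (H / x ^ 2 + 4 * (2 * H / x ^ 2)) := by gcongr
    _ = α + 9 * H / x ^ 2 := by ring

lemma exists_inv_sq_le_mean (c : TailEquation σ H θ p S u h g) :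
    ∃ C > 0, ∀ᶠ x in atTop, 1 / x ^ 2 ≤ C * (runningMean g x / scale x ^ 4) := by
  obtain ⟨b, hb, hmean⟩ := c.exists_pos_le_mul_mean
  refine ⟨1 / b, by positivity, ?_⟩
  filter_upwards [hmean, tendsto_scale.eventually_ge_atTop 1, eventually_gt_atTop 0]
    with x hbx hs1 hx
  have hsx : scale x ^ 4 ≤ x := by
    conv_rhs => rw [← scale_pow hx.le]
    exact pow_le_pow_right₀ hs1 (by norm_num)
  rw [one_div_mul_eq_div, div_div, div_le_div_iff₀ (by positivity) (by positivity)]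
  nlinarith [mul_le_mul hsx hbx hb.le hx.le]

lemma exists_g_le_mul_mean (c : TailEquation σ H θ p S u h g) (hR : SmoothTailProfile p S S' L) :
    ∃ C > 0, ∀ᶠ x in atTop, g x ≤ C * scale x ^ 2 * runningMean g x := by
  obtain ⟨C₁, hC₁, hwin⟩ := c.exists_mean_le_on_window
  obtain ⟨C₂, hC₂, hinv⟩ := c.exists_inv_sq_le_mean
  have hH := c.H_pos
  refine ⟨C₁ + 9 * H * C₂, by positivity, ?_⟩
  filter_upwards [hwin, hinv, c.eventually_g_le_of_mean_le hR,
    tendsto_scale.eventually_ge_atTop 1, eventually_gt_atTop 0] with x hwinx hinvx hg hs1 hx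
  have hA := c.mean_nonneg hx.le
  have hs : runningMean g x / scale x ^ 4 ≤ scale x ^ 2 * runningMean g x :=
    (div_le_self hA (one_le_pow₀ hs1)).trans (le_mul_of_one_le_left hA (one_le_pow₀ hs1))
  calc g x ≤ C₁ * scale x ^ 2 * runningMean g x + 9 * H * (1 / x ^ 2) := by
        rw [mul_one_div]
        exact hg _ (by positivity) hwinx
    _ ≤ C₁ * scale x ^ 2 * runningMean g x +
          9 * H * (C₂ * (scale x ^ 2 * runningMean g x)) := by
        gcongr
        exact hinvx.trans (by gcongr)
    _ = (C₁ + 9 * H * C₂) * scale x ^ 2 * runningMean g x := by ring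

lemma exists_mean_sub_le_on_window (c : TailEquation σ H θ p S u h g)
    (hR : SmoothTailProfile p S S' L) :
    ∃ C > 0, ∀ᶠ x in atTop, ∀ z ∈ Icc (x - 2 * scale x ^ 2) (x + 2 * scale x ^ 2),
      |runningMean g z - runningMean g x| ≤ C * (runningMean g x / scale x ^ 4) := by
  obtain ⟨C₁, hC₁, hwin⟩ := c.exists_mean_le_on_window
  obtain ⟨C₂, hC₂, hg⟩ := c.exists_g_le_mul_mean hR
  refine ⟨4 * (4 * C₂ * C₁ + 1), by positivity, ?_⟩
  filter_upwards [hwin, eventually_forall_ge_half hg, eventually_scale_sq_le,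
    tendsto_scale.eventually_ge_atTop 1, eventually_gt_atTop 0] with x hwinx hgx hs hs1 hx z hz
  have hA := c.mean_nonneg hx.le
  have hG : ∀ y ∈ Icc (x - 2 * scale x ^ 2) (x + 2 * scale x ^ 2),
      g y ≤ 4 * C₂ * C₁ * scale x ^ 4 * runningMean g x := fun y hy => by
    have hy0 : 0 ≤ y := by linarith [hy.1]
    have hys := scale_le_two_mul hy0 (by linarith [hy.2] : y ≤ 2 * x)
    have hys0 : 0 ≤ scale y := Real.rpow_nonneg hy0 _
    calc g y ≤ C₂ * scale y ^ 2 * runningMean g y := hgx y (by linarith [hy.1])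
      _ ≤ C₂ * (2 * scale x) ^ 2 * (C₁ * scale x ^ 2 * runningMean g x) := by
        gcongr
        · exact c.mean_nonneg hy0
        · exact hwinx y hy
      _ = 4 * C₂ * C₁ * scale x ^ 4 * runningMean g x := by ring
  refine (abs_runningMean_sub_le c.continuous_g (fun y => (c.g_mem y).1) hx (by linarith) hG
    hz).trans ?_
  calc 2 * (2 * scale x ^ 2) / x * (4 * C₂ * C₁ * scale x ^ 4 * runningMean g x + runningMean g x)
      ≤ 2 * (2 * scale x ^ 2) / x *
          (4 * C₂ * C₁ * scale x ^ 4 * runningMean g x + scale x ^ 4 * runningMean g x) := by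
        gcongr
        exact le_mul_of_one_le_left hA (one_le_pow₀ hs1)
    _ = 4 * (4 * C₂ * C₁ + 1) * (runningMean g x / scale x ^ 4) * (scale x ^ 10 / x) := by
        field_simp; ring
    _ = 4 * (4 * C₂ * C₁ + 1) * (runningMean g x / scale x ^ 4) := by
        rw [scale_pow hx.le, div_self hx.ne', mul_one]

lemma u_mem_Icc (c : TailEquation σ H θ p S u h g) {y b₁ b₂ a₁ a₂ : ℝ} (hy : 0 < y)
    (hg : g y ∈ Icc b₁ b₂) (hA : runningMean g y ∈ Icc a₁ a₂) :
    u y ∈ Icc (θ * b₁ + (1 - θ) * a₁) (θ * b₂ + (1 - θ) * a₂) := by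
  have hθ : 0 ≤ 1 - θ := by linarith [c.θ_le]
  have hθ0 := c.θ_pos.le
  rw [c.u_eq y hy]
  exact ⟨by gcongr; exacts [hg.1, hA.1], by gcongr; exacts [hg.2, hA.2]⟩

lemma eventually_g_mem_Icc_and_S_mem_Icc (c : TailEquation σ H θ p S u h g)
    (hR : SmoothTailProfile p S S' L) :
    ∀ᶠ x in atTop, ∀ z ∈ Icc (x / 2) (2 * x), ∀ v w, 0 < v →
      (∀ y ∈ Icc (z - 2 * scale x) (z + 2 * scale x), u y ∈ Icc v w) →
      g z ∈ Icc (S v - v / x ^ 2) (S w + 2 * H / x ^ 2) ∧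
        S (u z) ∈ Icc (S v - v / x ^ 2) (S w + 2 * H / x ^ 2) := by
  filter_upwards [c.eventually_S_sub_le_g, c.eventually_g_le_S_add hR, eventually_gt_atTop 0]
    with x hlow hupp hx z hz v w hv hu
  have hH := c.H_pos
  have hs0 := scale_pos hx
  have hw : ∀ {y}, u y ∈ Icc v w → 0 < w := fun hy => hv.trans_le (hy.1.trans hy.2)
  have hSw : ∀ y, u y ∈ Icc v w → S (u y) ≤ S w := fun y hy =>
    c.S_mono (c.u_pos y) (hw hy) hy.2
  have huz := hu z ⟨by linarith, by linarith⟩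
  refine ⟨⟨hlow z hz v hv fun y hy => (hu y hy).1,
    hupp z hz _ (c.S_nonneg w (hw huz)) fun y hy => hSw y (hu y hy)⟩, ?_, ?_⟩
  · exact (sub_le_self _ (by positivity)).trans (c.S_mono hv (c.u_pos z) huz.1)
  · exact (hSw z huz).trans (le_add_of_nonneg_right (by positivity))

lemma eventually_commonBand_step (c : TailEquation σ H θ p S u h g)
    (hR : SmoothTailProfile p S S' L) {v₀ : ℝ} (hv₀ : 0 < v₀)
    (hLip : ∀ v w, 0 < v → v ≤ w → w ≤ v₀ → S w - S v ≤ 3 / 2 * (w - v)) :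
    ∀ᶠ x in atTop, ∀ a₁ a₂ R Λ, 0 < a₁ → 0 ≤ R → R + 2 * scale x ≤ 2 * scale x ^ 2 →
      (∀ z ∈ Icc (x - 2 * scale x ^ 2) (x + 2 * scale x ^ 2), runningMean g z ∈ Icc a₁ a₂) →
      0 ≤ Λ → CommonBand g (fun z => S (u z)) x (R + 2 * scale x) Λ →
      CommonBand g (fun z => S (u z)) x R
        (3 / 4 * Λ + (3 / 2 * (a₂ - a₁) + 2 * H / x ^ 2 + v₀ / x ^ 2)) := by
  filter_upwards [c.eventually_g_mem_Icc_and_S_mem_Icc hR, eventually_scale_sq_le,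
    eventually_gt_atTop 0, eventually_forall_ge_half (c.tendsto_u.eventually_le_const hv₀)]
    with x hmem hs hx huv a₁ a₂ R Λ ha₁ hR hRs hA hΛ ⟨b, hb, hbΛ⟩
  have hs0 := scale_pos hx
  set v := θ * b + (1 - θ) * a₁
  set w := min (θ * (b + Λ) + (1 - θ) * a₂) v₀
  have hv : 0 < v := by nlinarith [c.θ_pos, c.θ_le]
  have hu : ∀ y ∈ Icc (x - (R + 2 * scale x)) (x + (R + 2 * scale x)), u y ∈ Icc v w :=
    fun y hy => by
      have hmem := c.u_mem_Icc (by linarith [hy.1]) (hbΛ y hy).1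
        (hA y ⟨by linarith [hy.1], by linarith [hy.2]⟩)
      exact ⟨hmem.1, le_min hmem.2 (huv y (by linarith [hy.1]))⟩
  have hvw : v ≤ w := nonempty_Icc.1 ⟨_, hu x ⟨by linarith, by linarith⟩⟩
  have hSvw : S w - S v ≤ 3 / 4 * Λ + 3 / 2 * (a₂ - a₁) := by
    have ha : a₁ ≤ a₂ := nonempty_Icc.1 ⟨_, hA x ⟨by linarith, by linarith⟩⟩
    have hwv : w - v ≤ θ * Λ + (1 - θ) * (a₂ - a₁) := by
      linarith [min_le_left (θ * (b + Λ) + (1 - θ) * a₂) v₀]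
    nlinarith [hLip v w hv hvw (min_le_right _ _), c.θ_pos, c.θ_le]
  have hvx : v / x ^ 2 ≤ v₀ / x ^ 2 := by gcongr; exact hvw.trans (min_le_right _ _)
  refine ⟨max 0 (S v - v / x ^ 2), le_max_left _ _, fun z hz => ?_⟩
  obtain ⟨hgz, hSz⟩ := hmem z ⟨by linarith [hz.1], by linarith [hz.2]⟩ v w hv fun y hy =>
    hu y ⟨by linarith [hy.1, hz.1], by linarith [hy.2, hz.2]⟩
  have hmax := le_max_right 0 (S v - v / x ^ 2)
  exact ⟨⟨max_le (c.g_mem z).1 hgz.1, by linarith [hgz.2]⟩,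
    ⟨max_le (c.S_u_mem z).1 hSz.1, by linarith [hSz.2]⟩⟩

lemma exists_abs_g_sub_S_le_of_mean_mem (c : TailEquation σ H θ p S u h g)
    (hR : SmoothTailProfile p S S' L) :
    ∃ C > 0, ∀ᶠ x in atTop, ∀ a₁ a₂, 0 < a₁ →
      (∀ z ∈ Icc (x - 2 * scale x ^ 2) (x + 2 * scale x ^ 2), runningMean g z ∈ Icc a₁ a₂) →
      |g x - S (u x)| ≤ 6 * (a₂ - a₁) + C / x ^ 2 := by
  obtain ⟨v₀, hv₀, hLip⟩ := hR.exists_S_sub_le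
  have hH := c.H_pos
  refine ⟨5 * v₀ + 8 * H, by positivity, ?_⟩
  filter_upwards [c.eventually_commonBand_step hR hv₀ hLip, eventually_contraction,
    eventually_scale_sq_le, eventually_gt_atTop 0,
    eventually_forall_ge_half (c.tendsto_u.eventually_le_const hv₀),
    eventually_forall_ge_half (c.tendsto_g.eventually_le_const hv₀)]
    with x hstep hiter hs hx huv hgv a₁ a₂ ha₁ hA
  have ha : a₁ ≤ a₂ := nonempty_Icc.1 ⟨_, hA x ⟨by nlinarith, by nlinarith⟩⟩
  have hstart : ∀ R ≤ 2 * scale x ^ 2, CommonBand g (fun z => S (u z)) x R v₀ := fun R hR => by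
    refine ⟨0, le_rfl, fun z hz => ?_⟩
    have hz2 : x / 2 ≤ z := by linarith [hz.1]
    rw [zero_add]
    exact ⟨⟨(c.g_mem z).1, hgv z hz2⟩,
      ⟨(c.S_u_mem z).1, (c.S_lt (c.u_pos z)).le.trans (huv z hz2)⟩⟩
  have hδ : 0 ≤ 3 / 2 * (a₂ - a₁) + 2 * H / x ^ 2 + v₀ / x ^ 2 :=
    add_nonneg (add_nonneg (by linarith) (by positivity)) (by positivity)
  obtain ⟨Λ, hΛ, hband⟩ := hiter _ v₀ _ hv₀.le hδ hstart
    fun R Λ hR hRs => hstep a₁ a₂ R Λ ha₁ hR hRs hA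
  calc |g x - S (u x)| ≤ Λ := hband.abs_sub_le
    _ ≤ v₀ / x ^ 2 + 4 * (3 / 2 * (a₂ - a₁) + 2 * H / x ^ 2 + v₀ / x ^ 2) := hΛ
    _ = 6 * (a₂ - a₁) + (5 * v₀ + 8 * H) / x ^ 2 := by ring

lemma exists_abs_g_sub_S_le (c : TailEquation σ H θ p S u h g)
    (hR : SmoothTailProfile p S S' L) :
    ∃ C > 0, ∀ᶠ x in atTop, |g x - S (u x)| ≤ C * (runningMean g x / scale x ^ 4) := by
  obtain ⟨C₁, hC₁, hlocal⟩ := c.exists_abs_g_sub_S_le_of_mean_mem hR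
  obtain ⟨C₂, hC₂, hwin⟩ := c.exists_mean_sub_le_on_window hR
  obtain ⟨C₃, hC₃, hinv⟩ := c.exists_inv_sq_le_mean
  refine ⟨12 * C₂ + C₁ * C₃, by positivity, ?_⟩
  filter_upwards [hlocal, hwin, hinv, c.eventually_mean_pos,
    tendsto_scale.eventually_ge_atTop (C₂ + 1)] with x hx hwinx hinvx hA hs
  set e := runningMean g x / scale x ^ 4
  have he : C₂ * e < runningMean g x := by
    have hs1 : 1 ≤ scale x := by linarith
    rw [← mul_div_assoc, div_lt_iff₀ (by positivity), mul_comm]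
    gcongr
    exact (lt_add_one C₂).trans_le (hs.trans (le_self_pow₀ hs1 (by norm_num)))
  refine (hx (runningMean g x - C₂ * e) (runningMean g x + C₂ * e) (by linarith) fun z hz =>
    mem_Icc_iff_abs_le.1 ((abs_sub_comm _ _).trans_le (hwinx z hz))).trans ?_
  calc 6 * (runningMean g x + C₂ * e - (runningMean g x - C₂ * e)) + C₁ / x ^ 2
      = 12 * C₂ * e + C₁ * (1 / x ^ 2) := by ring
    _ ≤ 12 * C₂ * e + C₁ * (C₃ * e) := by gcongr
    _ = (12 * C₂ + C₁ * C₃) * e := by ring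

end TailEquation

/-! ### Regular variation -/

lemma abs_sub_sub_mul_log_le {φ φ' : ℝ → ℝ} {β ε a b : ℝ} (ha : 0 < a) (hab : a ≤ b)
    (hφ : ∀ y ∈ Icc a b, HasDerivAt φ (φ' y) y) (hε : ∀ y ∈ Icc a b, |y * φ' y - β| ≤ ε) :
    |φ b - φ a - β * (Real.log b - Real.log a)| ≤ ε * (Real.log b - Real.log a) := by
  have hlog : ∀ y ∈ Icc a b, HasDerivAt Real.log y⁻¹ y := fun y hy =>
    Real.hasDerivAt_log (ha.trans_le hy.1).ne'
  have hbound : ∀ y ∈ Icc a b, |φ' y - β * y⁻¹| ≤ ε * y⁻¹ := fun y hy => by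
    have hy0 := ha.trans_le hy.1
    rw [← div_eq_mul_inv ε, le_div_iff₀ hy0, mul_comm, ← abs_of_pos hy0, ← abs_mul,
      abs_of_pos hy0, mul_sub, mul_left_comm, mul_inv_cancel₀ hy0.ne', mul_one]
    exact hε y hy
  have hupper := sub_le_mul_sub_of_hasDerivAt_le (C := 0) hab
    (fun y hy => (hφ y hy).sub ((hlog y hy).const_mul (β + ε)))
    fun y hy => by linarith [(abs_le.1 (hbound y hy)).2]
  have hlower := sub_le_mul_sub_of_hasDerivAt_le (C := 0) hab
    (fun y hy => ((hlog y hy).const_mul (β - ε)).sub (hφ y hy))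
    fun y hy => by linarith [(abs_le.1 (hbound y hy)).1]
  simp only [Pi.sub_apply] at hupper hlower
  exact abs_le.2 ⟨by linarith, by linarith⟩

lemma exists_abs_sub_sub_mul_log_le {φ φ' : ℝ → ℝ} {β ε : ℝ}
    (hφ : ∀ᶠ y in atTop, HasDerivAt φ (φ' y) y)
    (h : Tendsto (fun y => y * φ' y) atTop (nhds β)) (hε : 0 < ε) :
    ∃ Z ≥ 1, ∀ a b, Z ≤ a → a ≤ b →
      |φ b - φ a - β * (Real.log b - Real.log a)| ≤ ε * (Real.log b - Real.log a) := by
  obtain ⟨Y, hY⟩ := eventually_atTop.1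
    (hφ.and (h.eventually (Metric.closedBall_mem_nhds β hε)))
  refine ⟨max Y 1, le_max_right _ _, fun a b ha hab =>
    abs_sub_sub_mul_log_le (φ' := φ') (by linarith [le_max_right Y 1]) hab (fun y hy => ?_)
      fun y hy => ?_⟩
  · exact (hY y (by linarith [le_max_left Y 1, hy.1])).1
  · exact (hY y (by linarith [le_max_left Y 1, hy.1])).2

lemma tendsto_comp_mul_sub {φ φ' : ℝ → ℝ} {β l : ℝ} (hφ : ∀ᶠ y in atTop, HasDerivAt φ (φ' y) y)
    (h : Tendsto (fun y => y * φ' y) atTop (nhds β)) (hl : 0 < l) :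
    Tendsto (fun α => φ (α * l) - φ α) atTop (nhds (β * Real.log l)) := by
  rw [Metric.tendsto_atTop]
  intro ε hε
  obtain ⟨Z, hZ, hbound⟩ := exists_abs_sub_sub_mul_log_le hφ h
    (div_pos hε (by positivity : 0 < |Real.log l| + 1))
  set δ := ε / (|Real.log l| + 1)
  refine ⟨max Z (Z / l), fun α hα => ?_⟩
  have hα : Z ≤ α := (le_max_left _ _).trans hα
  have hαl : Z ≤ α * l := (div_le_iff₀ hl).1 ((le_max_right _ _).trans ‹_›)
  have hlog : Real.log (α * l) = Real.log α + Real.log l :=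
    Real.log_mul (by linarith) hl.ne'
  have hδ : |φ (α * l) - φ α - β * Real.log l| ≤ δ * |Real.log l| := by
    rcases le_total α (α * l) with hle | hle
    · have := hbound _ _ hα hle
      rw [hlog, add_sub_cancel_left] at this
      refine this.trans ?_
      gcongr
      exact le_abs_self _
    · have := hbound _ _ hαl hle
      rw [hlog, sub_add_cancel_left, mul_neg, sub_neg_eq_add, ← abs_neg] at this
      rw [show φ (α * l) - φ α - β * Real.log l = -(φ α - φ (α * l) + β * Real.log l) by ring]
      refine this.trans ?_
      gcongr
      exact neg_le_abs _
  calc dist (φ (α * l) - φ α) (β * Real.log l) ≤ δ * |Real.log l| := hδ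
    _ < δ * (|Real.log l| + 1) := by gcongr; exact lt_add_one _
    _ = ε := div_mul_cancel₀ _ (by positivity)

lemma tendsto_div_log {φ φ' : ℝ → ℝ} {β : ℝ} (hφ : ∀ᶠ y in atTop, HasDerivAt φ (φ' y) y)
    (h : Tendsto (fun y => y * φ' y) atTop (nhds β)) :
    Tendsto (fun x => φ x / Real.log x) atTop (nhds β) := by
  rw [Metric.tendsto_nhds]
  intro ε hε
  obtain ⟨Z, hZ, hbound⟩ := exists_abs_sub_sub_mul_log_le hφ h (half_pos hε)
  set Q := |φ Z - β * Real.log Z|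
  filter_upwards [eventually_ge_atTop Z, Real.tendsto_log_atTop.eventually_gt_atTop (2 * Q / ε)]
    with x hx hlogx
  have hlogx0 : 0 < Real.log x := lt_of_le_of_lt (by positivity) hlogx
  have hlogZ := Real.log_nonneg hZ
  rw [div_lt_iff₀ hε] at hlogx
  rw [Real.dist_eq, div_sub' hlogx0.ne', abs_div, abs_of_pos hlogx0, div_lt_iff₀ hlogx0]
  calc |φ x - Real.log x * β|
      = |(φ x - φ Z - β * (Real.log x - Real.log Z)) + (φ Z - β * Real.log Z)| := by ring_nf
    _ ≤ ε / 2 * (Real.log x - Real.log Z) + Q := (abs_add_le _ _).trans <| by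
        gcongr
        exact hbound Z x le_rfl hx
    _ < ε * Real.log x := by nlinarith

section RegularVariation
variable {f f' : ℝ → ℝ} {ρ : ℝ}

lemma eventually_hasDerivAt_log (hpos : ∀ᶠ x in atTop, 0 < f x)
    (hf : ∀ᶠ x in atTop, HasDerivAt f (f' x) x) :
    ∀ᶠ x in atTop, HasDerivAt (fun y => Real.log (f y)) (f' x / f x) x := by
  filter_upwards [hpos, hf] with x hx hfx using hfx.log hx.ne'

/-- Karamata: the index of regular variation is the limit of the elasticity. -/
lemma tendsto_comp_mul_div_self (hpos : ∀ᶠ x in atTop, 0 < f x)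
    (hf : ∀ᶠ x in atTop, HasDerivAt f (f' x) x)
    (h : Tendsto (fun x => x * (f' x / f x)) atTop (nhds ρ)) {l : ℝ} (hl : 0 < l) :
    Tendsto (fun α => f (α * l) / f α) atTop (nhds (l ^ ρ)) := by
  have hlog := (Real.continuous_exp.tendsto _).comp
    (tendsto_comp_mul_sub (eventually_hasDerivAt_log hpos hf) h hl)
  rw [mul_comm, ← Real.rpow_def_of_pos hl] at hlog
  have hmul : Tendsto (fun α : ℝ => α * l) atTop atTop := tendsto_id.atTop_mul_const hl
  refine hlog.congr' ?_
  filter_upwards [hpos, hmul.eventually hpos] with α hα hαl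
  exact (Real.exp_sub _ _).trans (by rw [Real.exp_log hα, Real.exp_log hαl])

lemma eventually_one_le_pow_mul_rpow (hpos : ∀ᶠ x in atTop, 0 < f x)
    (hf : ∀ᶠ x in atTop, HasDerivAt f (f' x) x)
    (h : Tendsto (fun x => x * (f' x / f x)) atTop (nhds 0)) (n : ℕ) {δ : ℝ} (hδ : 0 < δ) :
    ∀ᶠ x in atTop, 1 ≤ f x ^ n * x ^ δ := by
  have hlog := (tendsto_div_log (eventually_hasDerivAt_log hpos hf) h).const_mul (n : ℝ)
  rw [mul_zero] at hlog
  filter_upwards [hpos, hlog.eventually_const_le (neg_lt_zero.2 hδ), eventually_gt_atTop 1]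
    with x hfx hx hx1
  have hlogx := Real.log_pos hx1
  rw [← mul_div_assoc, le_div_iff₀ hlogx] at hx
  have hx0 : 0 < x := by linarith
  rw [← Real.log_nonneg_iff (by positivity), Real.log_mul (by positivity) (by positivity),
    Real.log_pow, Real.log_rpow hx0]
  linarith

/-- The substitution `y = 1 / f ^ n` turns the differential relation into `x * y' → c`. -/
lemma tendsto_div_log_rpow (hpos : ∀ᶠ x in atTop, 0 < f x)
    (hf : ∀ᶠ x in atTop, HasDerivAt f (f' x) x) {n : ℕ} (hn : 1 ≤ n) {c : ℝ} (hc : 0 < c)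
    (h : Tendsto (fun x => n * (-(x * f' x) / f x ^ (n + 1))) atTop (nhds c)) :
    Tendsto (fun x => f x / (c ^ (-(1 : ℝ) / n) * Real.log x ^ (-(1 : ℝ) / n))) atTop
      (nhds 1) := by
  have hn0 : (n : ℝ) ≠ 0 := by positivity
  have hderiv : ∀ᶠ x in atTop,
      HasDerivAt (fun x => (f x ^ n)⁻¹) (-(n * f x ^ (n - 1) * f' x) / (f x ^ n) ^ 2) x := by
    filter_upwards [hpos, hf] with x hx hfx using (hfx.pow n).inv (pow_pos hx n).ne'
  have hlog : Tendsto (fun x => (f x ^ n)⁻¹ / Real.log x) atTop (nhds c) := by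
    refine tendsto_div_log hderiv (h.congr' ?_)
    filter_upwards [hpos] with x hx
    obtain ⟨m, rfl⟩ := Nat.exists_eq_add_of_le' hn
    rw [Nat.add_sub_cancel]
    field_simp
    ring
  have hpow := (hlog.div_const c).rpow_const (p := -(1 : ℝ) / n) (.inl (div_ne_zero hc.ne' hc.ne'))
  rw [div_self hc.ne', Real.one_rpow] at hpow
  refine hpow.congr' ?_
  filter_upwards [hpos, eventually_gt_atTop 1] with x hfx hx
  have hlogx := Real.log_pos hx
  have hroot : ((f x ^ n)⁻¹) ^ (-(1 : ℝ) / n) = f x := by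
    rw [← Real.rpow_natCast, ← Real.rpow_neg hfx.le, ← Real.rpow_mul hfx.le]
    field_simp
    exact Real.rpow_one _
  rw [Real.div_rpow (by positivity) hc.le, Real.div_rpow (by positivity) hlogx.le, hroot, div_div,
    mul_comm (Real.log x ^ _)]

end RegularVariation

namespace TailEquation
variable {σ H θ L : ℝ} {p S S' u h g : ℝ → ℝ}

lemma one_sub_θ_mul_L_pos (c : TailEquation σ H θ p S u h g) (hR : SmoothTailProfile p S S' L) :
    0 < 1 - θ * L := by
  nlinarith [c.θ_pos, c.θ_le, hR.L_le_one]

lemma eventually_hasDerivAt_mean (c : TailEquation σ H θ p S u h g) :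
    ∀ᶠ x in atTop, HasDerivAt (runningMean g) ((g x - runningMean g x) / x) x := by
  filter_upwards [eventually_ne_atTop 0] with x hx using hasDerivAt_runningMean c.continuous_g hx

lemma tendsto_g_sub_S_div_mean (c : TailEquation σ H θ p S u h g)
    (hR : SmoothTailProfile p S S' L) :
    Tendsto (fun x => (g x - S (u x)) / runningMean g x) atTop (nhds 0) := by
  obtain ⟨C, -, hg⟩ := c.exists_abs_g_sub_S_le hR
  refine squeeze_zero_norm' ?_ (tendsto_const_nhds.div_atTop
    ((tendsto_pow_atTop four_ne_zero).comp tendsto_scale) :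
      Tendsto (fun x => C / scale x ^ 4) atTop (nhds 0))
  filter_upwards [hg, c.eventually_mean_pos] with x hgx hA
  rw [Real.norm_eq_abs, abs_div, abs_of_pos hA, div_le_iff₀ hA, div_mul_eq_mul_div, mul_div_assoc]
  exact hgx

lemma tendsto_u_div_mean (c : TailEquation σ H θ p S u h g) (hR : SmoothTailProfile p S S' L) :
    Tendsto (fun x => u x / runningMean g x) atTop (nhds ((1 - θ) / (1 - θ * L))) := by
  have hratio := hR.tendsto_S_div.comp c.tendsto_u_nhdsGT
  have hlim := (((c.tendsto_g_sub_S_div_mean hR).const_mul θ).const_add (1 - θ)).div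
    ((hratio.const_mul θ).const_sub 1) (c.one_sub_θ_mul_L_pos hR).ne'
  rw [mul_zero, add_zero] at hlim
  refine hlim.congr' ?_
  filter_upwards [c.eventually_mean_pos, eventually_gt_atTop 0] with x hA hx
  have hu := c.u_pos x
  have hden : 0 < 1 - θ * (S (u x) / u x) := by
    have hlt : S (u x) / u x < 1 := (div_lt_one hu).2 (c.S_lt hu)
    nlinarith [c.θ_pos, c.θ_le]
  change (1 - θ + θ * ((g x - S (u x)) / runningMean g x)) / (1 - θ * (S (u x) / u x)) = _
  rw [div_eq_div_iff hden.ne' hA.ne']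
  field_simp
  rw [c.u_eq x hx]
  ring

lemma tendsto_elasticity_mean (c : TailEquation σ H θ p S u h g)
    (hR : SmoothTailProfile p S S' L) :
    Tendsto (fun x => x * ((g x - runningMean g x) / x / runningMean g x)) atTop
      (nhds ((L - 1) / (1 - θ * L))) := by
  have hθ := c.θ_pos.ne'
  have hlim := ((c.tendsto_u_div_mean hR).sub_const 1).div_const θ
  have hval : ((1 - θ) / (1 - θ * L) - 1) / θ = (L - 1) / (1 - θ * L) := by
    have := (c.one_sub_θ_mul_L_pos hR).ne'
    field_simp
    ring
  rw [hval] at hlim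
  refine hlim.congr' ?_
  filter_upwards [c.eventually_mean_pos, eventually_gt_atTop 0] with x hA hx
  rw [c.u_eq x hx]
  field_simp
  ring

theorem tendsto_u_comp_mul_div (c : TailEquation σ H θ p S u h g)
    (hR : SmoothTailProfile p S S' L) {l : ℝ} (hl : 0 < l) :
    Tendsto (fun α => u (α * l) / u α) atTop (nhds (l ^ ((L - 1) / (1 - θ * L)))) := by
  have hmul : Tendsto (fun α : ℝ => α * l) atTop atTop := tendsto_id.atTop_mul_const hl
  have hmean := tendsto_comp_mul_div_self c.eventually_mean_pos c.eventually_hasDerivAt_mean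
    (c.tendsto_elasticity_mean hR) hl
  have hu := c.tendsto_u_div_mean hR
  have hlim : (1 - θ) / (1 - θ * L) ≠ 0 :=
    (div_pos (by linarith [c.θ_le]) (c.one_sub_θ_mul_L_pos hR)).ne'
  have hprod := ((hu.comp hmul).div hu hlim).mul hmean
  rw [div_self hlim, one_mul] at hprod
  refine hprod.congr' ?_
  filter_upwards [c.eventually_mean_pos, hmul.eventually c.eventually_mean_pos] with α hA hAl
  have := c.u_pos α
  simp only [Pi.div_apply, Function.comp_apply]
  field_simp

section CriticalCase
variable (c : TailEquation σ H θ p S u h g) (hR : SmoothTailProfile p S S' 1)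
include c hR

lemma tendsto_u_div_mean_one : Tendsto (fun x => u x / runningMean g x) atTop (nhds 1) := by
  have hu := c.tendsto_u_div_mean hR
  rwa [mul_one, div_self (by linarith [c.θ_le])] at hu

lemma tendsto_g_sub_S_div_mean_pow (n : ℕ) :
    Tendsto (fun x => (g x - S (u x)) / runningMean g x ^ (n + 1)) atTop (nhds 0) := by
  obtain ⟨C, hC, hg⟩ := c.exists_abs_g_sub_S_le hR
  have hslow := eventually_one_le_pow_mul_rpow c.eventually_mean_pos c.eventually_hasDerivAt_mean
    (by simpa using c.tendsto_elasticity_mean hR) n (δ := 1 / 5) (by norm_num)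
  refine squeeze_zero_norm' ?_ (tendsto_const_nhds.div_atTop
    ((tendsto_pow_atTop two_ne_zero).comp tendsto_scale) :
      Tendsto (fun x => C / scale x ^ 2) atTop (nhds 0))
  filter_upwards [hg, hslow, c.eventually_mean_pos, eventually_gt_atTop 0] with x hgx hAx hA hx
  have hs := scale_pos hx
  have hsx : x ^ (1 / 5 : ℝ) = scale x ^ 2 := by
    rw [← inv_inv (scale x ^ 2), inv_scale_sq hx, Real.rpow_neg hx.le, inv_inv]
  rw [hsx] at hAx
  rw [Real.norm_eq_abs, abs_div, abs_of_pos (pow_pos hA _), div_le_iff₀ (by positivity)]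
  calc |g x - S (u x)| ≤ C * (runningMean g x / scale x ^ 4) * 1 := by rwa [mul_one]
    _ ≤ C * (runningMean g x / scale x ^ 4) * (runningMean g x ^ n * scale x ^ 2) := by gcongr
    _ = C / scale x ^ 2 * runningMean g x ^ (n + 1) := by field_simp; ring

lemma tendsto_mean_sub_g_div_mean_pow {n : ℕ} {k : ℝ}
    (hgap : Tendsto (fun v => (v - S v) / v ^ (n + 1)) (nhdsWithin 0 (Ioi 0)) (nhds (1 / k))) :
    Tendsto (fun x => (runningMean g x - g x) / runningMean g x ^ (n + 1)) atTop
      (nhds (1 / (1 - θ) * (1 / k))) := by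
  have hgapu : Tendsto (fun x => (u x - S (u x)) / runningMean g x ^ (n + 1)) atTop
      (nhds (1 / k)) := by
    have hlim := (hgap.comp c.tendsto_u_nhdsGT).mul ((c.tendsto_u_div_mean_one hR).pow (n + 1))
    rw [one_pow, mul_one] at hlim
    refine hlim.congr fun x => ?_
    have hu := c.u_pos x
    rw [Function.comp_apply, div_pow, div_mul_div_cancel₀ (by positivity)]
  have hlim := (hgapu.sub (c.tendsto_g_sub_S_div_mean_pow hR n)).const_mul (1 / (1 - θ))
  rw [sub_zero] at hlim
  refine hlim.congr' ?_
  filter_upwards [eventually_gt_atTop 0] with x hx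
  have hθ : 1 - θ ≠ 0 := by linarith [c.θ_le]
  rw [← sub_div, sub_sub_sub_cancel_right, c.u_eq x hx, ← mul_div_assoc]
  congr 1
  field_simp
  ring

theorem tendsto_u_div_log_rpow {n : ℕ} (hn : 1 ≤ n) {k : ℝ} (hk : 0 < k)
    (hgap : Tendsto (fun v => (v - S v) / v ^ (n + 1)) (nhdsWithin 0 (Ioi 0)) (nhds (1 / k))) :
    Tendsto (fun x => u x / ((1 / (1 - θ) * (n / k)) ^ (-(1 : ℝ) / n) *
      Real.log x ^ (-(1 : ℝ) / n))) atTop (nhds 1) := by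
  have hθ : 0 < 1 - θ := by linarith [c.θ_le]
  have hmean := tendsto_div_log_rpow c.eventually_mean_pos c.eventually_hasDerivAt_mean hn
    (c := 1 / (1 - θ) * (n / k)) (by positivity) <| by
      have hlim := (c.tendsto_mean_sub_g_div_mean_pow hR hgap).const_mul (n : ℝ)
      rw [mul_left_comm, mul_one_div] at hlim
      refine hlim.congr' ?_
      filter_upwards [eventually_ne_atTop 0] with x hx
      rw [mul_div_cancel₀ _ hx, neg_sub]
  have hprod := (c.tendsto_u_div_mean_one hR).mul hmean
  rw [one_mul] at hprod
  refine hprod.congr' ?_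
  filter_upwards [c.eventually_mean_pos] with x hA
  exact div_mul_div_cancel₀ hA.ne'

end CriticalCase
end TailEquation

/-! ### The law of `V` and its tails -/

lemma preimage_Ioi_eq_union {Ω : Type*} {V : Ω → ℝ} {y z : ℝ} (hyz : y ≤ z) :
    {ω | V ω > y} = V ⁻¹' Ioc y z ∪ {ω | V ω > z} :=
  congrArg (V ⁻¹' ·) (Ioc_union_Ioi_eq_Ioi hyz).symm

lemma disjoint_preimage_Ioc_Ioi {Ω : Type*} {V : Ω → ℝ} (y z : ℝ) :
    Disjoint (V ⁻¹' Ioc y z) {ω | V ω > z} :=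
  Ioc_disjoint_Ioi_same.preimage V

section Partial
variable {Ω : Type*} [MeasurableSpace Ω] {P : Measure Ω} {V : Ω → ℝ} {m M y z : ℝ}

lemma SuppIoo.integrable [IsFiniteMeasure P] (hs : SuppIoo P V m M) (hVm : Measurable V) :
    Integrable V P :=
  .of_mem_Icc m M hVm.aemeasurable hs.2.1

lemma Phip_sub_Phip (hVm : Measurable V) (hV : Integrable V P) (hyz : y ≤ z) :
    Phip P V y - Phip P V z = ∫ ω in V ⁻¹' Ioc y z, V ω ∂P := by
  rw [Phip, Phip, preimage_Ioi_eq_union hyz, setIntegral_union (disjoint_preimage_Ioc_Ioi y z)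
    (measurableSet_lt measurable_const hVm) hV.integrableOn hV.integrableOn, add_sub_cancel_right]

lemma setIntegral_mem_Icc_mul_measureReal [IsFiniteMeasure P] (hV : Integrable V P) {s : Set Ω}
    (hs : MeasurableSet s) (h : ∀ᵐ ω ∂P, ω ∈ s → V ω ∈ Icc m M) :
    ∫ ω in s, V ω ∂P ∈ Icc (m * P.real s) (M * P.real s) := by
  have hconst : ∀ c : ℝ, c * P.real s = ∫ _ in s, c ∂P := fun c => by
    rw [setIntegral_const, smul_eq_mul, mul_comm]
  rw [hconst, hconst]
  exact ⟨setIntegral_mono_on_ae (integrable_const m).integrableOn hV.integrableOn hs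
      (h.mono fun ω hω hωs => (hω hωs).1),
    setIntegral_mono_on_ae hV.integrableOn (integrable_const M).integrableOn hs
      (h.mono fun ω hω hωs => (hω hωs).2)⟩

section Finite
variable [IsFiniteMeasure P]

lemma Phip_mem_Icc (hVm : Measurable V) (hs : SuppIoo P V m M) (y : ℝ) :
    Phip P V y ∈ Icc (m * Pip P V y) (M * Pip P V y) :=
  setIntegral_mem_Icc_mul_measureReal (hs.integrable hVm) (measurableSet_lt measurable_const hVm)
    (hs.2.1.mono fun _ h _ => h)

lemma Phim_mem_Icc (hVm : Measurable V) (hs : SuppIoo P V m M) (y : ℝ) :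
    Phim P V y ∈ Icc (m * Pim P V y) (M * Pim P V y) :=
  setIntegral_mem_Icc_mul_measureReal (hs.integrable hVm) (measurableSet_le hVm measurable_const)
    (hs.2.1.mono fun _ h _ => h)

lemma Pip_pos (hs : SuppIoo P V m M) (hy : y < M) : 0 < Pip P V y :=
  ENNReal.toReal_pos (hs.2.2.1 y hy).ne' (measure_ne_top _ _)

lemma Pim_pos (hs : SuppIoo P V m M) (hy : m < y) : 0 < Pim P V y :=
  ENNReal.toReal_pos (hs.2.2.2 y hy).ne' (measure_ne_top _ _)

lemma Pip_sub_Pip (hVm : Measurable V) (hyz : y ≤ z) :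
    Pip P V y - Pip P V z = P.real (V ⁻¹' Ioc y z) := by
  change P.real {ω | V ω > y} - P.real {ω | V ω > z} = _
  rw [preimage_Ioi_eq_union hyz, measureReal_union (disjoint_preimage_Ioc_Ioi y z)
    (measurableSet_lt measurable_const hVm), add_sub_cancel_right]

lemma antitone_Pip : Antitone (Pip P V) := fun _ _ hyz =>
  measureReal_mono fun _ hω => hyz.trans_lt hω

lemma Phip_sub_Phip_mem_Icc (hVm : Measurable V) (hV : Integrable V P) (hyz : y ≤ z) :
    Phip P V y - Phip P V z ∈
      Icc (y * (Pip P V y - Pip P V z)) (z * (Pip P V y - Pip P V z)) := by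
  rw [Pip_sub_Pip hVm hyz, Phip_sub_Phip hVm hV hyz]
  exact setIntegral_mem_Icc_mul_measureReal hV (hVm measurableSet_Ioc)
    (.of_forall fun _ hω => Ioc_subset_Icc_self hω)

lemma mul_Pip_le_Phip (hVm : Measurable V) (hV : Integrable V P) (y : ℝ) :
    y * Pip P V y ≤ Phip P V y :=
  setIntegral_ge_of_const_le_real (measurableSet_lt measurable_const hVm) (measure_ne_top _ _)
    (fun _ hω => le_of_lt hω) hV.integrableOn

lemma Psip_le (hVm : Measurable V) (hs : SuppIoo P V m M) (hy : y < M) : Psip P V y ≤ M :=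
  (div_le_iff₀ (Pip_pos hs hy)).2 (Phip_mem_Icc hVm hs y).2

lemma monotoneOn_Psip (hVm : Measurable V) (hs : SuppIoo P V m M) :
    MonotoneOn (Psip P V) (Iio M) := by
  intro y hy z hz hyz
  rw [Psip, Psip, div_le_div_iff₀ (Pip_pos hs hy) (Pip_pos hs hz)]
  have hV := hs.integrable hVm
  have hdiff := (Phip_sub_Phip_mem_Icc hVm hV hyz).2
  have htail := mul_Pip_le_Phip hVm hV z
  have hanti : 0 ≤ Pip P V y - Pip P V z := sub_nonneg.2 (antitone_Pip hyz)
  linarith [mul_le_mul_of_nonneg_right hdiff (Pip_pos hs hz).le,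
    mul_le_mul_of_nonneg_right htail hanti]

/-- The linearization error of `Φ⁺` against `Π⁺` is of second order, since `V` stays between `y`
and `z` on the event where the two indicators differ. -/
lemma abs_Phip_sub_sub_mul_le (hVm : Measurable V) (hV : Integrable V P) (y z : ℝ) :
    |Phip P V z - Phip P V y - y * (Pip P V z - Pip P V y)| ≤
      |Pip P V z - Pip P V y| * |z - y| := by
  have hanti : Antitone (Pip P V) := antitone_Pip
  rcases le_total y z with hyz | hzy
  · obtain ⟨hlower, hupper⟩ := Phip_sub_Phip_mem_Icc hVm hV hyz
    have := mul_nonneg (sub_nonneg.2 (hanti hyz)) (sub_nonneg.2 hyz)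
    rw [abs_of_nonpos (sub_nonpos.2 (hanti hyz)), abs_of_nonneg (sub_nonneg.2 hyz)]
    exact abs_le.2 ⟨by linarith, by linarith⟩
  · obtain ⟨hlower, hupper⟩ := Phip_sub_Phip_mem_Icc hVm hV hzy
    have := mul_nonneg (sub_nonneg.2 (hanti hzy)) (sub_nonneg.2 hzy)
    rw [abs_of_nonneg (sub_nonneg.2 (hanti hzy)), abs_of_nonpos (sub_nonpos.2 hzy)]
    exact abs_le.2 ⟨by linarith, by linarith⟩

lemma hasDerivAt_Phip (hVm : Measurable V) (hV : Integrable V P) {π : ℝ}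
    (hπ : HasDerivAt (Pip P V) π y) : HasDerivAt (Phip P V) (y * π) y := by
  have herror :
      HasDerivAt (fun z => Phip P V z - Phip P V y - y * (Pip P V z - Pip P V y)) 0 y := by
    rw [hasDerivAt_iff_isLittleO, Asymptotics.isLittleO_iff]
    intro c hc
    filter_upwards [Metric.tendsto_nhds.1 hπ.continuousAt c hc] with z hz
    simp only [sub_self, mul_zero, sub_zero, smul_zero]
    exact (abs_Phip_sub_sub_mul_le hVm hV y z).trans
      (mul_le_mul_of_nonneg_right hz.le (abs_nonneg _))
  refine ((herror.add_const (Phip P V y)).add ((hπ.sub_const (Pip P V y)).const_mul y)).congr_deriv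
    (zero_add _) |>.congr_of_eventuallyEq (.of_forall fun z => ?_)
  simp only [Pi.add_apply]
  ring

lemma hasDerivAt_Psip (hVm : Measurable V) (hs : SuppIoo P V m M) (hy : y < M) {π : ℝ}
    (hπ : HasDerivAt (Pip P V) π y) :
    HasDerivAt (Psip P V) (π * (y - Psip P V y) / Pip P V y) y := by
  have hpos := Pip_pos hs hy
  refine ((hasDerivAt_Phip hVm (hs.integrable hVm) hπ).div hπ hpos.ne').congr_deriv ?_
  rw [Psip]
  field_simp

end Finite

section Probability
variable [IsProbabilityMeasure P]

lemma add_mul_Pip_le_Psip (hVm : Measurable V) (hs : SuppIoo P V m M) (hyz : y ≤ z) (hz : z < M) :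
    y + (z - y) * Pip P V z ≤ Psip P V y := by
  have hV := hs.integrable hVm
  have hgap : 0 ≤ (z - y) * Pip P V z := mul_nonneg (sub_nonneg.2 hyz) (Pip_pos hs hz).le
  rw [Psip, le_div_iff₀ (Pip_pos hs (hyz.trans_lt hz))]
  have hle_one : Pip P V y ≤ 1 := measureReal_le_one
  linarith [(Phip_sub_Phip_mem_Icc hVm hV hyz).1, mul_Pip_le_Phip hVm hV z,
    mul_le_mul_of_nonneg_left hle_one hgap]

lemma tailProfile (hVm : Measurable V) (hs : SuppIoo P V m M) :
    TailProfile (fun v => Pip P V (M - v)) fun v => M - Psip P V (M - v) where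
  p_pos v hv := Pip_pos hs (sub_lt_self M hv)
  p_le_one v _ := measureReal_le_one
  p_mono v _ w _ hvw := antitone_Pip (sub_le_sub_left hvw M)
  S_nonneg v hv := sub_nonneg.2 (Psip_le hVm hs (sub_lt_self M hv))
  S_mono v hv w hw hvw := sub_le_sub_left (monotoneOn_Psip hVm hs (sub_lt_self M hw)
    (sub_lt_self M hv) (sub_le_sub_left hvw M)) M
  S_gap b v hb hbv := by
    linarith [add_mul_Pip_le_Psip hVm hs (sub_le_sub_left hbv M) (sub_lt_self M hb)]

lemma tendsto_const_sub_nhdsGT_zero (M : ℝ) :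
    Tendsto (fun v => M - v) (nhdsWithin 0 (Ioi 0)) (nhdsWithin M (Iio M)) := by
  refine tendsto_nhdsWithin_iff.2 ⟨?_, eventually_mem_nhdsWithin.mono fun v => sub_lt_self M⟩
  exact (Continuous.tendsto' (by fun_prop) 0 M (sub_zero M)).mono_left nhdsWithin_le_nhds

lemma smoothTailProfile {L : ℝ} (hVm : Measurable V) (hs : SuppIoo P V m M)
    (hdiff : ∀ᶠ y in nhdsWithin M (Iio M), DifferentiableAt ℝ (Pip P V) y)
    (hL : Tendsto (deriv (Psip P V)) (nhdsWithin M (Iio M)) (nhds L)) :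
    SmoothTailProfile (fun v => Pip P V (M - v)) (fun v => M - Psip P V (M - v))
      (fun v => deriv (Psip P V) (M - v)) L := by
  have hM := tendsto_const_sub_nhdsGT_zero M
  have hT := tailProfile hVm hs
  refine ⟨hT, ?_, ?_, hL.comp hM⟩ <;>
    filter_upwards [hM.eventually hdiff, self_mem_nhdsWithin] with v hv hv0
  · have hΨ := hasDerivAt_Psip hVm hs (sub_lt_self M hv0) hv.hasDerivAt
    have := (hΨ.differentiableAt.hasDerivAt.comp_const_sub M v).const_sub M
    rwa [neg_neg] at this
  · have hpos := Pip_pos hs (sub_lt_self M hv0)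
    have hgap : v - (M - Psip P V (M - v)) ≠ 0 := (sub_pos.2 (hT.S_lt hv0)).ne'
    refine ((hv.hasDerivAt.comp_const_sub M v).log hpos.ne').congr_deriv ?_
    rw [(hasDerivAt_Psip hVm hs (sub_lt_self M hv0) hv.hasDerivAt).deriv]
    field_simp
    ring

end Probability
end Partial

lemma abs_le_max_abs_mul {m M t b : ℝ} (hb : 0 ≤ b) (ht : t ∈ Icc (m * b) (M * b)) :
    |t| ≤ max |m| |M| * b := by
  have habs (c : ℝ) : |c| * b = |c * b| := by rw [abs_mul, abs_of_nonneg hb]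
  rw [max_mul_of_nonneg _ _ hb, habs, habs]
  exact abs_le_max_abs_abs ht.1 ht.2

lemma BddMeasurable.of_mem_Icc_mul {m M : ℝ} {a b : ℝ → ℝ} (ha : Measurable a)
    (hb : BddMeasurable b) (hb0 : ∀ z, 0 ≤ b z) (hab : ∀ z, a z ∈ Icc (m * b z) (M * b z)) :
    BddMeasurable a := by
  obtain ⟨C, hC⟩ := hb.bounded
  refine ⟨ha, max |m| |M| * C, fun z => (abs_le_max_abs_mul (hb0 z) (hab z)).trans ?_⟩
  exact mul_le_mul_of_nonneg_left ((le_abs_self _).trans (hC z)) (le_max_of_le_left (abs_nonneg m))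

section Equation
variable {Ω : Type*} [MeasurableSpace Ω] {P : Measure Ω} {V : Ω → ℝ}
  {m M σ : ℝ} {N : ℕ} {F : ℝ → ℝ}

lemma phip_eq_gaussConv_div (F : ℝ → ℝ) (x : ℝ) : phip P V σ F x =
    gaussConv σ (fun z => Phip P V (F z)) x / gaussConv σ (fun z => Pip P V (F z)) x := by
  simp only [phip, gaussConv, mul_comm]

lemma phim_eq_gaussConv_div (F : ℝ → ℝ) (x : ℝ) : phim P V σ F x =
    gaussConv σ (fun z => Phim P V (F z)) x / gaussConv σ (fun z => Pim P V (F z)) x := by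
  simp only [phim, gaussConv, mul_comm]

lemma measurable_phig (hσ : 0 < σ) (F : ℝ → ℝ) : Measurable (phig P V σ F) := by
  refine Measurable.ite measurableSet_Ici ?_ ?_
  · simp only [funext (phip_eq_gaussConv_div F)]
    exact (measurable_gaussConv hσ _).div (measurable_gaussConv hσ _)
  · simp only [funext (phim_eq_gaussConv_div F)]
    exact (measurable_gaussConv hσ _).div (measurable_gaussConv hσ _)

lemma measurable_setIntegral_prodMk_preimage [SFinite P] (hVm : Measurable V) {s : Set (ℝ × Ω)}
    (hs : MeasurableSet s) : Measurable fun y => ∫ ω in Prod.mk y ⁻¹' s, V ω ∂P := by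
  have hjoint : Measurable (Function.uncurry fun y => (Prod.mk y ⁻¹' s).indicator V) :=
    (hVm.comp measurable_snd).indicator hs
  simp only [← integral_indicator (measurable_prodMk_left hs)]
  exact hjoint.stronglyMeasurable.integral_prod_right.measurable

lemma measurable_Phip [SFinite P] (hVm : Measurable V) : Measurable (Phip P V) :=
  measurable_setIntegral_prodMk_preimage hVm
    (measurableSet_lt measurable_fst (hVm.comp measurable_snd))

lemma measurable_Phim [SFinite P] (hVm : Measurable V) : Measurable (Phim P V) :=
  measurable_setIntegral_prodMk_preimage hVm
    (measurableSet_le (hVm.comp measurable_snd) measurable_fst)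

section Finite
variable [IsFiniteMeasure P]

lemma measurable_Pim : Measurable (Pim P V) :=
  Monotone.measurable fun _ _ hyz => measureReal_mono fun _ hω => le_trans hω hyz

lemma abs_phig_le (hVm : Measurable V) (hs : SuppIoo P V m M) (hσ : 0 < σ) (F : ℝ → ℝ) (x : ℝ) :
    |phig P V σ F x| ≤ max |m| |M| := by
  have hC : 0 ≤ max |m| |M| := (abs_nonneg m).trans (le_max_left _ _)
  rw [phig]
  split_ifs
  · rw [phip_eq_gaussConv_div]
    exact abs_gaussConv_div_le hσ hC (fun z => measureReal_nonneg)
      (fun z => abs_le_max_abs_mul measureReal_nonneg (Phip_mem_Icc hVm hs _)) x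
  · rw [phim_eq_gaussConv_div]
    exact abs_gaussConv_div_le hσ hC (fun z => measureReal_nonneg)
      (fun z => abs_le_max_abs_mul measureReal_nonneg (Phim_mem_Icc hVm hs _)) x

lemma bddMeasurable_phig (hVm : Measurable V) (hs : SuppIoo P V m M) (hσ : 0 < σ) (F : ℝ → ℝ) :
    BddMeasurable (phig P V σ F) :=
  ⟨measurable_phig hσ F, _, abs_phig_le hVm hs hσ F⟩

lemma SolvesE.eq_add_runningMean (hF : SolvesE P V σ N F) (hVm : Measurable V)
    (hs : SuppIoo P V m M) (hσ : 0 < σ) {x : ℝ} (hx : x ≠ 0) :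
    F x = 1 / N * gaussConv σ (phig P V σ F) x +
      (N - 1) / N * runningMean (gaussConv σ (phig P V σ F)) x := by
  have hφ := bddMeasurable_phig hVm hs hσ F
  rw [hF x, ← integral_gqbar_mul hσ hφ hx, gaussConv, ← integral_const_mul, ← integral_const_mul,
    ← integral_add ((integrable_gq_mul hσ hφ x).const_mul _)
      ((integrable_gqbar_mul hσ hφ hx).const_mul _)]
  simp only [add_mul, mul_assoc]

lemma SolvesE.measurable (hF : SolvesE P V σ N F) (hVm : Measurable V) (hs : SuppIoo P V m M)
    (hσ : 0 < σ) : Measurable F := by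
  have hcont := (uniformContinuous_gaussConv hσ (bddMeasurable_phig hVm hs hσ F)).continuous
  refine ((hcont.measurable.const_mul (1 / (N : ℝ))).add
    ((measurable_runningMean hcont).const_mul (((N : ℝ) - 1) / N))).measurable_of_countable_ne
      ((countable_singleton 0).mono fun x hx => ?_)
  exact not_imp_comm.1 (fun h => (hF.eq_add_runningMean hVm hs hσ h).symm) hx

lemma bddMeasurable_Pip_comp (hFm : Measurable F) : BddMeasurable fun z => Pip P V (F z) :=
  .of_mem_Icc (antitone_Pip.measurable.comp hFm) fun _ =>
    ⟨measureReal_nonneg, measureReal_mono (subset_univ _)⟩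

lemma bddMeasurable_Pim_comp (hFm : Measurable F) : BddMeasurable fun z => Pim P V (F z) :=
  .of_mem_Icc (measurable_Pim.comp hFm) fun _ =>
    ⟨measureReal_nonneg, measureReal_mono (subset_univ _)⟩

lemma bddMeasurable_Phip_comp (hVm : Measurable V) (hs : SuppIoo P V m M) (hFm : Measurable F) :
    BddMeasurable fun z => Phip P V (F z) :=
  .of_mem_Icc_mul ((measurable_Phip hVm).comp hFm) (bddMeasurable_Pip_comp hFm)
    (fun _ => measureReal_nonneg) fun _ => Phip_mem_Icc hVm hs _

lemma bddMeasurable_Phim_comp (hVm : Measurable V) (hs : SuppIoo P V m M) (hFm : Measurable F) :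
    BddMeasurable fun z => Phim P V (F z) :=
  .of_mem_Icc_mul ((measurable_Phim hVm).comp hFm) (bddMeasurable_Pim_comp hFm)
    (fun _ => measureReal_nonneg) fun _ => Phim_mem_Icc hVm hs _

lemma phig_mem_Icc (hVm : Measurable V) (hs : SuppIoo P V m M) (hσ : 0 < σ) (hFm : Measurable F)
    (hFr : ∀ x, F x ∈ Ioo m M) (x : ℝ) : phig P V σ F x ∈ Icc m M := by
  rw [phig]
  split_ifs
  · rw [phip_eq_gaussConv_div]
    exact gaussConv_div_mem_Icc hσ (bddMeasurable_Phip_comp hVm hs hFm)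
      (bddMeasurable_Pip_comp hFm) (fun z => Pip_pos hs (hFr z).2)
      (fun z => Phip_mem_Icc hVm hs _) x
  · rw [phim_eq_gaussConv_div]
    exact gaussConv_div_mem_Icc hσ (bddMeasurable_Phim_comp hVm hs hFm)
      (bddMeasurable_Pim_comp hFm) (fun z => Pim_pos hs (hFr z).1)
      (fun z => Phim_mem_Icc hVm hs _) x

lemma sub_phig_eq_gaussConv_div (hVm : Measurable V) (hs : SuppIoo P V m M) (hσ : 0 < σ)
    (hFm : Measurable F) (hFr : ∀ x, F x ∈ Ioo m M) {y : ℝ} (hy : 0 ≤ y) :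
    M - phig P V σ F y = gaussConv σ (fun z => (M - Psip P V (F z)) * Pip P V (F z)) y /
      gaussConv σ (fun z => Pip P V (F z)) y := by
  have hPip : BddMeasurable fun z => Pip P V (F z) := bddMeasurable_Pip_comp hFm
  have hden := gaussConv_pos hσ hPip (fun z => Pip_pos hs (hFr z).2) y
  have hnum : ∀ z, (M - Psip P V (F z)) * Pip P V (F z) = M * Pip P V (F z) - Phip P V (F z) :=
    fun z => by rw [sub_mul, Psip, div_mul_cancel₀ _ (Pip_pos hs (hFr z).2).ne']
  simp only [hnum]
  rw [gaussConv_sub hσ ((BddMeasurable.const M).mul hPip) (bddMeasurable_Phip_comp hVm hs hFm),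
    gaussConv_const_mul, sub_div, mul_div_cancel_right₀ _ hden.ne', phig, if_pos hy,
    phip_eq_gaussConv_div]

lemma SolvesE.sub_eq_add_runningMean (hF : SolvesE P V σ N F) (hVm : Measurable V)
    (hs : SuppIoo P V m M) (hσ : 0 < σ) (hN : N ≠ 0) (c : ℝ) {x : ℝ} (hx : x ≠ 0) :
    c - F x = 1 / N * gaussConv σ (fun z => c - phig P V σ F z) x +
      (1 - 1 / N) * runningMean (gaussConv σ fun z => c - phig P V σ F z) x := by
  have hφ := bddMeasurable_phig hVm hs hσ F
  have hconv : gaussConv σ (fun z => c - phig P V σ F z) =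
      fun y => c - gaussConv σ (phig P V σ F) y := funext fun y => by
    rw [gaussConv_sub hσ (.const c) hφ, gaussConv_const hσ]
  rw [hconv, runningMean_const_sub (uniformContinuous_gaussConv hσ hφ).continuous c hx,
    hF.eq_add_runningMean hVm hs hσ hx, sub_div, div_self (Nat.cast_ne_zero.2 hN)]
  ring

end Finite

lemma SolvesE.tailEquation [IsProbabilityMeasure P] (hF : SolvesE P V σ N F) (hVm : Measurable V)
    (hs : SuppIoo P V m M) (hσ : 0 < σ) (hN : 2 ≤ N) (hFr : ∀ x, F x ∈ Ioo m M) :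
    TailEquation σ (M - m) (1 / N) (fun v => Pip P V (M - v)) (fun v => M - Psip P V (M - v))
      (fun x => M - F x) (fun x => M - phig P V σ F x)
      (gaussConv σ fun x => M - phig P V σ F x) := by
  have hFm := hF.measurable hVm hs hσ
  have hPip : Measurable (Pip P V) := antitone_Pip.measurable
  have hN2 : (2 : ℝ) ≤ N := Nat.ofNat_le_cast.2 hN
  exact
    { tailProfile hVm hs with
      σ_pos := hσ
      θ_pos := by positivity
      θ_le := one_div_le_one_div_of_le two_pos hN2
      u_pos := fun x => sub_pos.2 (hFr x).2
      u_le := fun x => sub_le_sub_left (hFr x).1.le M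
      measurable_p_u := by
        simp only [sub_sub_cancel]
        exact hPip.comp hFm
      measurable_S_u := by
        simp only [sub_sub_cancel]
        exact (((measurable_Phip hVm).div hPip).comp hFm).const_sub M
      measurable_h := (measurable_phig hσ F).const_sub M
      h_mem := fun z => by
        have := phig_mem_Icc hVm hs hσ hFm hFr z
        exact ⟨sub_nonneg.2 this.2, sub_le_sub_left this.1 M⟩
      g_eq := rfl
      h_eq := fun y hy => by
        simpa only [sub_sub_cancel] using sub_phig_eq_gaussConv_div hVm hs hσ hFm hFr hy
      u_eq := fun x hx => hF.sub_eq_add_runningMean hVm hs hσ (by lia) M hx.ne' }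

end Equation

theorem stmt18_general {Ω : Type*} [MeasurableSpace Ω] (P : Measure Ω) [IsProbabilityMeasure P]
    (V : Ω → ℝ) (hVmeas : Measurable V) (m M : ℝ) (hsupp : SuppIoo P V m M)
    (σ : ℝ) (hσ : 0 < σ) (N : ℕ) (hN : 2 ≤ N)
    (hdiff : ∀ᶠ y in nhdsWithin M (Iio M), DifferentiableAt ℝ (Pip P V) y)
    (L : ℝ) (hL : Tendsto (deriv (Psip P V)) (nhdsWithin M (Iio M)) (nhds L))
    (F : ℝ → ℝ) (hFr : ∀ x, F x ∈ Ioo m M) (hFsol : SolvesE P V σ N F) :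
    (∀ x : ℝ, 0 < x →
      Tendsto (fun α : ℝ => (M - F (α * x)) / (M - F α)) atTop
        (nhds (x ^ ((L - 1) / (1 - L / (N : ℝ)))))) ∧
    (L = 1 → ∀ n : ℕ, 1 ≤ n → ∀ k : ℝ, 0 < k →
      Tendsto (fun x : ℝ => (Psip P V x - x) / (M - x) ^ (n + 1))
        (nhdsWithin M (Iio M)) (nhds (1 / k)) →
      Tendsto (fun x : ℝ => (M - F x) /
          ((((N : ℝ) / ((N : ℝ) - 1)) * ((n : ℝ) / k)) ^ (-(1 : ℝ) / (n : ℝ)) *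
            Real.log x ^ (-(1 : ℝ) / (n : ℝ))))
        atTop (nhds 1)) := by
  have hE := hFsol.tailEquation hVmeas hsupp hσ hN hFr
  have hR := smoothTailProfile hVmeas hsupp hdiff hL
  refine ⟨fun x hx => ?_, ?_⟩
  · simpa only [one_div_mul_eq_div] using hE.tendsto_u_comp_mul_div hR hx
  · rintro rfl n hn k hk hgap
    have hgap' : Tendsto (fun v => (v - (M - Psip P V (M - v))) / v ^ (n + 1))
        (nhdsWithin 0 (Ioi 0)) (nhds (1 / k)) :=
      (hgap.comp (tendsto_const_sub_nhdsGT_zero M)).congr fun v => by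
        rw [Function.comp_apply, sub_sub_cancel, sub_sub_eq_add_sub, add_sub_right_comm, sub_add]
        ring
    have hweight : (1 : ℝ) / (1 - 1 / N) = N / (N - 1) := by
      rw [one_sub_div (by positivity), one_div_div]
    simpa only [hweight] using hE.tendsto_u_div_log_rpow hR hn hk hgap'

/-- Let `N ≥ 2`, `Π⁺` be `C¹` on `(m,M)` with `Ψ⁺ₓ(M) = lim_{x→M⁻} (Ψ⁺)'(x)`
existing, and let `F` be a solution of (E) with values in `(m,M)`. Then (a) `M − F` is regularly
varying at `∞` of index `ρ⁺ = (Ψ⁺ₓ(M) − 1)/(1 − Ψ⁺ₓ(M)/N)`; (b) if moreover `Ψ⁺ₓ(M) = 1` and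
`(Ψ⁺(x) − x)/(M − x)^{n+1} → 1/k` as `x → M⁻` for some `n ≥ 1`, `k ∈ (0,∞)`, then
`M − F(x) ∼ ((N/(N−1))·(n/k))^{−1/n}·(log x)^{−1/n}` as `x → ∞`. -/
theorem stmt18 {Ω : Type*} [MeasurableSpace Ω] (P : Measure Ω) [IsProbabilityMeasure P]
    (V : Ω → ℝ) (hVmeas : Measurable V) (hV : Integrable V P)
    (m M : ℝ) (hsupp : SuppIoo P V m M)
    (σ : ℝ) (hσ : 0 < σ) (N : ℕ) (hN : 2 ≤ N)
    (hC1 : ContDiffOn ℝ 1 (Pip P V) (Set.Ioo m M))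
    (L : ℝ) (hL : Tendsto (deriv (Psip P V)) (nhdsWithin M (Set.Iio M)) (nhds L))
    (F : ℝ → ℝ) (hFr : ∀ x, F x ∈ Set.Ioo m M) (hFsol : SolvesE P V σ N F) :
    (∀ x : ℝ, 0 < x →
      Tendsto (fun α : ℝ => (M - F (α * x)) / (M - F α)) atTop
        (nhds (x ^ ((L - 1) / (1 - L / (N:ℝ)))))) ∧
    (L = 1 → ∀ n : ℕ, 1 ≤ n → ∀ k : ℝ, 0 < k →
      Tendsto (fun x : ℝ => (Psip P V x - x) / (M - x) ^ (n + 1))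
        (nhdsWithin M (Set.Iio M)) (nhds (1 / k)) →
      Tendsto (fun x : ℝ => (M - F x) /
          ((((N:ℝ) / ((N:ℝ) - 1)) * ((n:ℝ) / k)) ^ (-(1:ℝ) / (n:ℝ)) *
            Real.log x ^ (-(1:ℝ) / (n:ℝ))))
        atTop (nhds 1)) := by
  refine stmt18_general P V hVmeas m M hsupp σ hσ N hN ?_ L hL F hFr hFsol
  filter_upwards [Ioo_mem_nhdsLT hsupp.1] with y hy
  exact (hC1.differentiableOn one_ne_zero).differentiableAt (isOpen_Ioo.mem_nhds hy)
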